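/- Let K be an infinite field, S = K[x_1,...,x_n], and fix an integer j. Let I ⊆ S and J ⊆ S be homogeneous ideals and let w, w' ∈ Z_{≥0}^n be weight vectors. Then for a general change of coordinates g ∈ GL_n(K), one has dim_K Tor_i^S(I, S/g(J))_j ≤ dim_K Tor_i^S(in_w(I), S/in_{w'}(J))_j for all i ≥ 0. -/

import Mathlib

open MvPolynomial TensorProduct CategoryTheory

noncomputable section

/-- The polynomial ring `S = K[x_1,...,x_n]`, standard graded. -/
abbrev PS (K : Type) [Field K] (n : ℕ) : Type := MvPolynomial (Fin n) K

variable (K : Type) [Field K] (n : ℕ)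

/-- An ideal of `S` is homogeneous if it contains all homogeneous components of its
elements. -/
def IsHomog (I : Ideal (PS K n)) : Prop :=
  ∀ f ∈ I, ∀ d : ℕ, MvPolynomial.homogeneousComponent d f ∈ I

/-- The change of coordinates of `S` induced by `g ∈ GL_n(K)`, determined by
`g(x_i) = ∑_j g_{ji} x_j`. -/
def coordChange (g : GL (Fin n) K) : PS K n →ₐ[K] PS K n :=
  MvPolynomial.aeval (fun i => ∑ j, ((g : Matrix (Fin n) (Fin n) K) j i) • MvPolynomial.X j)

/-- A property `P` holds for a general change of coordinates `g ∈ GL_n(K)` if there is a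
nonempty Zariski open subset `U ⊆ GL_n(K)` on which it holds; equivalently (as `GL_n(K)` is
an irreducible variety over the infinite field `K`) there is a nonzero polynomial `F` in the
matrix entries such that `P g` holds whenever `F` does not vanish at `g`. -/
def generally (P : GL (Fin n) K → Prop) : Prop :=
  ∃ F : MvPolynomial (Fin n × Fin n) K, F ≠ 0 ∧
    ∀ g : GL (Fin n) K,
      MvPolynomial.eval (fun p => (g : Matrix (Fin n) (Fin n) K) p.1 p.2) F ≠ 0 → P g

/-- The standard grading of `S = K[x_1,...,x_n]`, extended to `ℤ` (zero in negative
degrees). -/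
def polyGrade (d : ℤ) : Submodule K (PS K n) :=
  if 0 ≤ d then homogeneousSubmodule (Fin n) K d.toNat else ⊥

/-- The degree `d` component of the (internal) tensor-product grading on `A ⊗[K] B`. -/
def tensorGrade {A B : Type} [AddCommGroup A] [Module K A] [AddCommGroup B] [Module K B]
    (GA : ℤ → Submodule K A) (GB : ℤ → Submodule K B) (d : ℤ) :
    Submodule K (A ⊗[K] B) :=
  ⨆ p : ℤ, LinearMap.range (TensorProduct.map (GA p).subtype (GB (d - p)).subtype)

variable (N : Type) [AddCommGroup N] [Module K N] [Module (PS K n) N]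
  [IsScalarTower K (PS K n) N]

/-- The tower of `K`-vector spaces `D_i = S^{⊗ i} ⊗_K N` appearing in the bar complex
`M ⊗_K S^{⊗ i} ⊗_K N`, which computes `Tor^S_i(M, N)`. -/
def barD : ℕ → ModuleCat K
  | 0 => ModuleCat.of K N
  | (i + 1) => ModuleCat.of K (PS K n ⊗[K] (barD i))

/-- The internal `ℤ`-grading on `D_i = S^{⊗ i} ⊗_K N` induced by the standard grading of
`S` and a grading `GN` of `N`. -/
def barDGrade (GN : ℤ → Submodule K N) : (i : ℕ) → ℤ → Submodule K (barD K n N i)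
  | 0 => GN
  | (i + 1) => tensorGrade K (polyGrade K n) (barDGrade GN i)

/-- Scalar multiplication `S → N → N` as a `K`-bilinear map. -/
def smulBilin : PS K n →ₗ[K] N →ₗ[K] N :=
  LinearMap.mk₂ K (fun s x => s • x)
    (fun s₁ s₂ x => add_smul s₁ s₂ x)
    (fun c s x => smul_assoc c s x)
    (fun s x y => smul_add s x y)
    (fun c s x => (smul_comm c s x).symm)

/-- The "contraction" part of the bar differential, `c_i : D_{i+1} → D_i`, defined
recursively by `c_0(s ⊗ x) = s • x` and
`c_{i+1}(s ⊗ s' ⊗ t) = (s s') ⊗ t - s ⊗ c_i(s' ⊗ t)`. -/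
def barC : (i : ℕ) → ((barD K n N (i + 1)) →ₗ[K] (barD K n N i))
  | 0 => TensorProduct.lift (smulBilin K n N)
  | (i + 1) =>
      (TensorProduct.map (LinearMap.mul' K (PS K n)) LinearMap.id).comp
        (TensorProduct.assoc K (PS K n) (PS K n) (barD K n N i)).symm.toLinearMap
      - TensorProduct.map LinearMap.id (barC i)

variable (M : Type) [AddCommGroup M] [Module K M] [Module (PS K n) M]
  [IsScalarTower K (PS K n) M]

/-- Right scalar multiplication `M ⊗[K] S → M` as a `K`-linear map. -/
def smulMapM : M ⊗[K] PS K n →ₗ[K] M :=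
  TensorProduct.lift (LinearMap.mk₂ K (fun m s => s • m)
    (fun m₁ m₂ s => smul_add s m₁ m₂)
    (fun c m s => smul_comm s c m)
    (fun m s₁ s₂ => add_smul s₁ s₂ m)
    (fun c m s => smul_assoc c s m))

/-- The bar differential `b_i : M ⊗ D_{i+1} → M ⊗ D_i`,
`b(m ⊗ s ⊗ t) = (s • m) ⊗ t - m ⊗ c_i(s ⊗ t)`.  The complex
`⋯ → M ⊗_K S^{⊗ i} ⊗_K N → ⋯ → M ⊗_K S ⊗_K N → M ⊗_K N → 0`
is the bar complex `M ⊗_S Bar(S, N)`, whose `i`-th homology is `Tor^S_i(M, N)`;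
it is a complex of graded vector spaces with degree-preserving differentials. -/
def barB (i : ℕ) : (M ⊗[K] (barD K n N (i + 1))) →ₗ[K] (M ⊗[K] (barD K n N i)) :=
  (TensorProduct.map (smulMapM K n M) LinearMap.id).comp
      (TensorProduct.assoc K M (PS K n) (barD K n N i)).symm.toLinearMap
  - TensorProduct.map LinearMap.id (barC K n N i)

/-- `dim_K Tor_i^S(M, N)_j`, the dimension of the degree-`j` component of the graded module
`Tor_i^S(M, N)` for graded modules `M`, `N`: it is computed as the homology of the degree-`j`
strand of the bar complex, namely `dim (ker b_i)_j - dim (im b_{i+1})_j`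
(for `i = 0`, `dim (M ⊗_K N)_j - dim (im b_1)_j`). -/
def torStrandDim (GM : ℤ → Submodule K M) (GN : ℤ → Submodule K N) : ℕ → ℤ → ℕ
  | 0, j =>
      Module.finrank K ↥(tensorGrade K GM (barDGrade K n N GN 0) j) -
        Module.finrank K
          ↥(LinearMap.range (barB K n N M 0) ⊓ tensorGrade K GM (barDGrade K n N GN 0) j)
  | (i + 1), j =>
      Module.finrank K
          ↥(LinearMap.ker (barB K n N M i) ⊓
              tensorGrade K GM (barDGrade K n N GN (i + 1)) j) -
        Module.finrank K
          ↥(LinearMap.range (barB K n N M (i + 1)) ⊓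
              tensorGrade K GM (barDGrade K n N GN (i + 1)) j)

/-- The quotient grading on `S/J`. -/
def quotGrade (J : Ideal (PS K n)) : ℤ → Submodule K (PS K n ⧸ J) := fun d =>
  (polyGrade K n d).map (Ideal.Quotient.mkₐ K J).toLinearMap

/-- The grading on an ideal `I ⊆ S` viewed as an `S`-module. -/
def idealGrade (I : Ideal (PS K n)) : ℤ → Submodule K ↥I := fun d =>
  (polyGrade K n d).comap ((Submodule.subtype I).restrictScalars K)

/-- `dim_K Tor_i^S(S/I, S/J)_j`. -/
def torQQ (I J : Ideal (PS K n)) (i : ℕ) (j : ℤ) : ℕ :=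
  torStrandDim K n (PS K n ⧸ J) (PS K n ⧸ I) (quotGrade K n I) (quotGrade K n J) i j

/-- `dim_K Tor_i^S(I, S/J)_j`. -/
def torIQ (I J : Ideal (PS K n)) (i : ℕ) (j : ℤ) : ℕ :=
  torStrandDim K n (PS K n ⧸ J) ↥I (idealGrade K n I) (quotGrade K n J) i j

/-- A property `P` holds for a general (nonzero) scalar `λ ∈ K` if it holds on a nonempty
Zariski open subset of `K`; equivalently, outside the zero set of some nonzero polynomial.
(Since `{0}` is Zariski closed, it is equivalent to quantify over `λ ∈ Kˣ`.) -/
def generallyScalar (P : Kˣ → Prop) : Prop :=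
  ∃ F : Polynomial K, F ≠ 0 ∧ ∀ l : Kˣ, Polynomial.eval (l : K) F ≠ 0 → P l

/-- The diagonal change of coordinates `D_{λ,w} : x_i ↦ λ^{-w_i} x_i`. -/
def diagCoord (w : Fin n → ℕ) (l : Kˣ) : PS K n →ₐ[K] PS K n :=
  MvPolynomial.aeval (fun i => (((l⁻¹ : Kˣ) : K) ^ (w i)) • MvPolynomial.X i)

/-- The `w`-weight of an exponent vector: `∑ w_i m_i`. -/
def wdeg (w : Fin n → ℕ) (m : Fin n →₀ ℕ) : ℕ := ∑ i, w i * m i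

/-- The initial form `in_w(f)`: the sum of the terms of `f` of maximal `w`-weight. -/
def initialForm (w : Fin n → ℕ) (f : PS K n) : PS K n :=
  ∑ m ∈ f.support.filter (fun m => wdeg n w m = f.support.sup (wdeg n w)),
    MvPolynomial.monomial m (MvPolynomial.coeff m f)

/-- The initial ideal `in_w(I)` of `I` with respect to the weight order given by `w`. -/
def initialIdealW (w : Fin n → ℕ) (I : Ideal (PS K n)) : Ideal (PS K n) :=
  Ideal.span {g | ∃ f ∈ I, g = initialForm K n w f}

end

open MvPolynomial TensorProduct CategoryTheory

noncomputable section GradedLA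

variable {K : Type} [Field K]
variable {A B A' B' : Type} [AddCommGroup A] [Module K A] [AddCommGroup B] [Module K B]
  [AddCommGroup A'] [Module K A'] [AddCommGroup B'] [Module K B']

theorem tensorGrade_eq_span (GA : ℤ → Submodule K A) (GB : ℤ → Submodule K B) (d : ℤ) :
    tensorGrade K GA GB d =
      Submodule.span K {x | ∃ p, ∃ a ∈ GA p, ∃ b ∈ GB (d - p), a ⊗ₜ[K] b = x} := by
  apply le_antisymm
  · refine iSup_le fun p => ?_
    rintro _ ⟨y, rfl⟩
    induction y using TensorProduct.induction_on with
    | zero => simp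
    | tmul a b =>
      exact Submodule.subset_span ⟨p, a, a.2, b, b.2, by simp⟩
    | add x y hx hy => rw [map_add]; exact add_mem hx hy
  · rw [Submodule.span_le]
    rintro _ ⟨p, a, ha, b, hb, rfl⟩
    refine Submodule.mem_iSup_of_mem p ?_
    exact ⟨(⟨a, ha⟩ : GA p) ⊗ₜ (⟨b, hb⟩ : GB (d - p)), by simp⟩

theorem tmul_mem_tensorGrade {GA : ℤ → Submodule K A} {GB : ℤ → Submodule K B} {p q d : ℤ}
    (h : p + q = d) {a : A} {b : B} (ha : a ∈ GA p) (hb : b ∈ GB q) :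
    a ⊗ₜ[K] b ∈ tensorGrade K GA GB d := by
  rw [tensorGrade_eq_span]
  refine Submodule.subset_span ⟨p, a, ha, b, ?_, rfl⟩
  have : d - p = q := by omega
  rwa [this]

theorem tensorGrade_le {GA : ℤ → Submodule K A} {GB : ℤ → Submodule K B} {d : ℤ}
    {W : Submodule K (A ⊗[K] B)}
    (h : ∀ p q, p + q = d → ∀ a ∈ GA p, ∀ b ∈ GB q, a ⊗ₜ[K] b ∈ W) :
    tensorGrade K GA GB d ≤ W := by
  rw [tensorGrade_eq_span, Submodule.span_le]
  rintro _ ⟨p, a, ha, b, hb, rfl⟩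
  exact h p (d - p) (by omega) a ha b hb

theorem map_tensorGrade_le {GA : ℤ → Submodule K A} {GB : ℤ → Submodule K B}
    {GA' : ℤ → Submodule K A'} {GB' : ℤ → Submodule K B'} (f : A →ₗ[K] A') (g : B →ₗ[K] B')
    (hf : ∀ p, (GA p).map f ≤ GA' p) (hg : ∀ p, (GB p).map g ≤ GB' p) (d : ℤ) :
    (tensorGrade K GA GB d).map (TensorProduct.map f g) ≤ tensorGrade K GA' GB' d := by
  rw [Submodule.map_le_iff_le_comap]
  apply tensorGrade_le
  intro p q h a ha b hb
  exact tmul_mem_tensorGrade h (hf p ⟨a, ha, rfl⟩) (hg q ⟨b, hb, rfl⟩)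

theorem map_tensorGrade_eq {GA : ℤ → Submodule K A} {GB : ℤ → Submodule K B}
    {GA' : ℤ → Submodule K A'} {GB' : ℤ → Submodule K B'} (f : A →ₗ[K] A') (g : B →ₗ[K] B')
    (hf : ∀ p, (GA p).map f = GA' p) (hg : ∀ p, (GB p).map g = GB' p) (d : ℤ) :
    (tensorGrade K GA GB d).map (TensorProduct.map f g) = tensorGrade K GA' GB' d := by
  apply le_antisymm (map_tensorGrade_le f g (fun p => (hf p).le) (fun p => (hg p).le) d)
  apply tensorGrade_le
  intro p q h a ha b hb
  rw [← hf] at ha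
  rw [← hg] at hb
  obtain ⟨a, ha, rfl⟩ := ha
  obtain ⟨b, hb, rfl⟩ := hb
  exact ⟨a ⊗ₜ b, tmul_mem_tensorGrade h ha hb, by simp⟩

/-- A grading with a homogeneous basis, in nonnegative degrees with finite-dimensional pieces. -/
def Good (G : ℤ → Submodule K A) : Prop :=
  ∃ (ι : Type) (b : Module.Basis ι K A) (deg : ι → ℤ),
    (∀ p, G p = Submodule.span K (b '' {i | deg i = p})) ∧ (∀ i, 0 ≤ deg i) ∧
      ∀ p, {i | deg i = p}.Finite

theorem Good.neg {G : ℤ → Submodule K A} (h : Good G) {p : ℤ} (hp : p < 0) : G p = ⊥ := by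
  obtain ⟨ι, b, deg, h1, h2, h3⟩ := h
  rw [h1]
  have : {i | deg i = p} = ∅ := by
    ext i
    simp only [Set.mem_ofPred_eq, Set.mem_empty_iff_false, iff_false]
    have := h2 i
    omega
  simp [this]

theorem Good.finite {G : ℤ → Submodule K A} (h : Good G) (p : ℤ) :
    FiniteDimensional K (G p) := by
  obtain ⟨ι, b, deg, h1, h2, h3⟩ := h
  rw [h1]
  exact FiniteDimensional.span_of_finite K ((h3 p).image _)

theorem Good.proj {G : ℤ → Submodule K A} (h : Good G) (p : ℤ) :
    ∃ π : A →ₗ[K] A, (∀ x, π x ∈ G p) ∧ (∀ x ∈ G p, π x = x) ∧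
      (∀ q, q ≠ p → ∀ x ∈ G q, π x = 0) := by
  classical
  obtain ⟨ι, b, deg, h1, h2, h3⟩ := h
  refine ⟨b.constr K (fun i => if deg i = p then b i else 0), ?_, ?_, ?_⟩
  · intro x
    have hx : x ∈ Submodule.span K (Set.range b) := by rw [b.span_eq]; trivial
    induction hx using Submodule.span_induction with
    | zero => simp
    | mem x hx =>
      obtain ⟨i, rfl⟩ := hx
      rw [Module.Basis.constr_basis]
      split_ifs with hi
      · rw [h1]; exact Submodule.subset_span ⟨i, hi, rfl⟩
      · exact zero_mem _
    | add x y _ _ hx hy => rw [map_add]; exact add_mem hx hy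
    | smul c x _ hx => rw [map_smul]; exact Submodule.smul_mem _ _ hx
  · intro x hx
    rw [h1] at hx
    induction hx using Submodule.span_induction with
    | mem x hx =>
      obtain ⟨i, hi, rfl⟩ := hx
      rw [Module.Basis.constr_basis]
      exact if_pos hi
    | zero => simp
    | add x y _ _ hx hy => rw [map_add, hx, hy]
    | smul c x _ hx => rw [map_smul, hx]
  · intro q hq x hx
    rw [h1] at hx
    induction hx using Submodule.span_induction with
    | mem x hx =>
      obtain ⟨i, hi, rfl⟩ := hx
      rw [Module.Basis.constr_basis]
      have hi : deg i = q := hi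
      exact if_neg (by rw [hi]; exact hq)
    | zero => simp
    | add x y _ _ hx hy => rw [map_add, hx, hy, add_zero]
    | smul c x _ hx => rw [map_smul, hx, smul_zero]

theorem Good.iSup_eq {G : ℤ → Submodule K A} (h : Good G) : iSup G = ⊤ := by
  obtain ⟨ι, b, deg, h1, h2, h3⟩ := h
  rw [eq_top_iff, ← b.span_eq, Submodule.span_le]
  rintro _ ⟨i, rfl⟩
  refine Submodule.mem_iSup_of_mem (deg i) ?_
  rw [h1]
  exact Submodule.subset_span ⟨i, rfl, rfl⟩

/-- Elements of degree `p` in the range of a graded map lift to degree `p`. -/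
theorem Good.lift {G : ℤ → Submodule K A} {G' : ℤ → Submodule K B} (h : Good G) (h' : Good G')
    (f : A →ₗ[K] B) (hf : ∀ p, (G p).map f ≤ G' p) {p : ℤ} {x : A} (hx : f x ∈ G' p) :
    ∃ y ∈ G p, f y = f x := by
  obtain ⟨π, a1, a2, a3⟩ := h.proj p
  obtain ⟨π', b1, b2, b3⟩ := h'.proj p
  have key : ∀ x, f (π x) = π' (f x) := by
    clear hx
    intro x
    have hx : x ∈ iSup G := by rw [h.iSup_eq]; trivial
    induction hx using Submodule.iSup_induction' with
    | mem q x hx =>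
      have hfx := hf q ⟨x, hx, rfl⟩
      by_cases hq : q = p
      · subst hq; rw [a2 x hx, b2 _ hfx]
      · rw [a3 q hq x hx, b3 q hq _ hfx, map_zero]
    | zero => simp
    | add x y _ _ hx hy => simp only [map_add, hx, hy]
  exact ⟨π x, a1 x, by rw [key, b2 _ hx]⟩

theorem Good.tensor {GA : ℤ → Submodule K A} {GB : ℤ → Submodule K B} (hA : Good GA)
    (hB : Good GB) : Good (tensorGrade K GA GB) := by
  obtain ⟨ι, b, deg, h1, h2, h3⟩ := hA
  obtain ⟨ι', b', deg', h1', h2', h3'⟩ := hB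
  refine ⟨ι × ι', b.tensorProduct b', fun i => deg i.1 + deg' i.2, ?_, ?_, ?_⟩
  · intro d
    apply le_antisymm
    · apply tensorGrade_le
      intro p q hpq x hx y hy
      rw [h1] at hx
      rw [h1'] at hy
      have := Submodule.apply_mem_map₂ (TensorProduct.mk K A B) hx hy
      rw [Submodule.map₂_span_span] at this
      refine Submodule.span_mono ?_ this
      rintro _ ⟨_, ⟨i, hi, rfl⟩, _, ⟨i', hi', rfl⟩, rfl⟩
      refine ⟨(i, i'), ?_, by simp⟩
      have hi : deg i = p := hi
      have hi' : deg' i' = q := hi'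
      change deg i + deg' i' = d
      omega
    · rw [Submodule.span_le]
      rintro _ ⟨⟨i, i'⟩, hi, rfl⟩
      simp only [Module.Basis.tensorProduct_apply]
      refine tmul_mem_tensorGrade (p := deg i) (q := deg' i') hi ?_ ?_
      · rw [h1]; exact Submodule.subset_span ⟨i, rfl, rfl⟩
      · rw [h1']; exact Submodule.subset_span ⟨i', rfl, rfl⟩
  · intro i
    have := h2 i.1
    have := h2' i.2
    change 0 ≤ deg i.1 + deg' i.2
    omega
  · intro d
    have : {i : ι × ι' | deg i.1 + deg' i.2 = d} ⊆
        ⋃ p ∈ Finset.Icc 0 d, {i | deg i = p} ×ˢ {i | deg' i = d - p} := by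
      rintro ⟨i, i'⟩ hi
      have hi : deg i + deg' i' = d := hi
      have := h2 i
      have := h2' i'
      simp only [Set.mem_iUnion]
      refine ⟨deg i, Finset.mem_Icc.2 ⟨by omega, by omega⟩, ?_⟩
      exact ⟨rfl, show deg' i' = d - deg i by omega⟩
    refine Set.Finite.subset ?_ this
    exact Set.Finite.biUnion (Finset.finite_toSet _) fun p _ => (h3 p).prod (h3' _)

theorem Good.equiv {G : ℤ → Submodule K A} {G' : ℤ → Submodule K A'} (h : Good G) (h' : Good G')
    (hd : ∀ p, Module.finrank K (G p) = Module.finrank K (G' p)) :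
    ∃ e : A ≃ₗ[K] A', ∀ p, (G p).map e.toLinearMap = G' p := by
  obtain ⟨ι, b, deg, h1, h2, h3⟩ := h
  obtain ⟨ι', b', deg', h1', h2', h3'⟩ := h'
  have key : ∀ p, Nonempty ({i // deg i = p} ≃ {i // deg' i = p}) := by
    intro p
    have : Finite {i // deg i = p} := h3 p
    have : Finite {i // deg' i = p} := h3' p
    apply Finite.card_eq.mp
    have e1 : Module.finrank K (G p) = Nat.card {i // deg i = p} := by
      have := Fintype.ofFinite {i // deg i = p}
      have := finrank_span_eq_card (R := K)
        (b.linearIndependent.comp (Subtype.val : {i // deg i = p} → ι) Subtype.val_injective)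
      rw [Nat.card_eq_fintype_card, ← this, h1]
      have hr : Set.range (Subtype.val : {i // deg i = p} → _) = {i | deg i = p} := by
        ext x
        exact ⟨by rintro ⟨y, rfl⟩; exact y.2, fun h => ⟨⟨x, h⟩, rfl⟩⟩
      rw [Set.range_comp, hr]
    have e2 : Module.finrank K (G' p) = Nat.card {i // deg' i = p} := by
      have := Fintype.ofFinite {i // deg' i = p}
      have := finrank_span_eq_card (R := K)
        (b'.linearIndependent.comp (Subtype.val : {i // deg' i = p} → ι') Subtype.val_injective)
      rw [Nat.card_eq_fintype_card, ← this, h1']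
      have hr : Set.range (Subtype.val : {i // deg' i = p} → _) = {i | deg' i = p} := by
        ext x
        exact ⟨by rintro ⟨y, rfl⟩; exact y.2, fun h => ⟨⟨x, h⟩, rfl⟩⟩
      rw [Set.range_comp, hr]
    rw [← e1, ← e2, hd]
  let e0 : ι ≃ ι' := (Equiv.sigmaFiberEquiv deg).symm.trans
    ((Equiv.sigmaCongrRight fun p => (key p).some).trans (Equiv.sigmaFiberEquiv deg'))
  have he0 : ∀ i, deg' (e0 i) = deg i := fun i => ((key (deg i)).some ⟨i, rfl⟩).2
  refine ⟨b.equiv b' e0, fun p => ?_⟩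
  rw [h1, h1', Submodule.map_span]
  congr 1
  ext x
  constructor
  · rintro ⟨_, ⟨i, hi, rfl⟩, rfl⟩
    exact ⟨e0 i, by simpa [he0] using hi, by simp⟩
  · rintro ⟨i, hi, rfl⟩
    refine ⟨b (e0.symm i), ⟨e0.symm i, ?_, rfl⟩, by simp⟩
    have := he0 (e0.symm i)
    simp only [Equiv.apply_symm_apply] at this
    simpa [← this] using hi

theorem finrank_map_of_injective (f : A →ₗ[K] B) (hf : Function.Injective f)
    (p : Submodule K A) : Module.finrank K (p.map f) = Module.finrank K p :=
  (Submodule.equivMapOfInjective f hf p).finrank_eq.symm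

theorem finrank_tensorGrade_eq {GA : ℤ → Submodule K A} {GB : ℤ → Submodule K B}
    {GA' : ℤ → Submodule K A'} {GB' : ℤ → Submodule K B'}
    (hA : Good GA) (hB : Good GB) (hA' : Good GA') (hB' : Good GB')
    (h1 : ∀ p, Module.finrank K (GA p) = Module.finrank K (GA' p))
    (h2 : ∀ p, Module.finrank K (GB p) = Module.finrank K (GB' p)) (d : ℤ) :
    Module.finrank K (tensorGrade K GA GB d) = Module.finrank K (tensorGrade K GA' GB' d) := by
  obtain ⟨e, he⟩ := hA.equiv hA' h1
  obtain ⟨e', he'⟩ := hB.equiv hB' h2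
  rw [← map_tensorGrade_eq e.toLinearMap e'.toLinearMap he he' d]
  exact (finrank_map_of_injective _ (TensorProduct.congr e e').injective _).symm

theorem finrank_map_add_inf (f : A →ₗ[K] B) (p : Submodule K A) [FiniteDimensional K p] :
    Module.finrank K (p.map f) + Module.finrank K (LinearMap.ker f ⊓ p : Submodule K A) =
      Module.finrank K p := by
  have := LinearMap.finrank_range_add_finrank_ker (f.domRestrict p)
  rw [← this]
  congr 1
  · rw [LinearMap.range_domRestrict]
  · rw [LinearMap.ker_domRestrict, inf_comm]
    have h : Submodule.comap p.subtype (p ⊓ LinearMap.ker f) =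
        Submodule.comap p.subtype (LinearMap.ker f) := by
      ext x
      simp
    rw [← LinearEquiv.finrank_eq (Submodule.comapSubtypeEquivOfLe (p := p ⊓ LinearMap.ker f)
      inf_le_left), h]

theorem finrank_sup_ker (f : A →ₗ[K] B) (P V : Submodule K A) [FiniteDimensional K V]
    (h : P ≤ V) :
    Module.finrank K (P ⊔ (LinearMap.ker f ⊓ V) : Submodule K A) + Module.finrank K (V.map f) =
      Module.finrank K (P.map f) + Module.finrank K V := by
  have hW : P ⊔ (LinearMap.ker f ⊓ V) ≤ V := sup_le h inf_le_right
  have : FiniteDimensional K (P ⊔ (LinearMap.ker f ⊓ V) : Submodule K A) :=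
    Submodule.finiteDimensional_of_le hW
  have h1 := finrank_map_add_inf f (P ⊔ (LinearMap.ker f ⊓ V))
  have h2 := finrank_map_add_inf f V
  have h3 : (P ⊔ (LinearMap.ker f ⊓ V)).map f = P.map f := by
    rw [Submodule.map_sup]
    apply sup_eq_left.mpr
    rintro _ ⟨x, hx, rfl⟩
    have : f x = 0 := hx.1
    rw [this]; exact zero_mem _
  have h4 : LinearMap.ker f ⊓ (P ⊔ (LinearMap.ker f ⊓ V)) = LinearMap.ker f ⊓ V := by
    apply le_antisymm
    · exact inf_le_inf_left _ hW
    · exact le_inf inf_le_left le_sup_right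
  rw [h3, h4] at h1
  omega

/-- Criterion for `Good` through projections. -/
theorem good_of_proj (G : ℤ → Submodule K A) (π : ℤ → A →ₗ[K] A)
    (h1 : ∀ p, ∀ x ∈ G p, π p x = x) (h2 : ∀ p q, q ≠ p → ∀ x ∈ G q, π p x = 0)
    (hs : iSup G = ⊤) (hneg : ∀ p < 0, G p = ⊥) (hfin : ∀ p, FiniteDimensional K (G p)) :
    Good G := by
  have hind : iSupIndep G := by
    intro p
    rw [disjoint_iff, eq_bot_iff]
    rintro x ⟨hx, hx'⟩
    have h0 : π p x = 0 := by
      have : (⨆ (q) (_ : q ≠ p), G q) ≤ LinearMap.ker (π p) :=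
        iSup₂_le fun q hq x hx => h2 p q hq x hx
      exact this hx'
    have : x = 0 := by rw [← h1 p x hx, h0]
    rw [this]; exact zero_mem _
  have hI : DirectSum.IsInternal G :=
    (DirectSum.isInternal_submodule_iff_iSupIndep_and_iSup_eq_top G).2 ⟨hind, hs⟩
  refine ⟨(p : ℤ) × Module.Basis.ofVectorSpaceIndex K (G p),
    hI.collectedBasis fun p => Module.Basis.ofVectorSpace K (G p), Sigma.fst, ?_, ?_, ?_⟩
  · intro p
    apply le_antisymm
    · have := (Module.Basis.ofVectorSpace K (G p)).span_eq
      have h := congrArg (Submodule.map (G p).subtype) this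
      rw [Submodule.map_span, Submodule.map_top, Submodule.range_subtype] at h
      rw [← h]
      apply Submodule.span_mono
      rintro _ ⟨_, ⟨i, rfl⟩, rfl⟩
      exact ⟨⟨p, i⟩, rfl, by simp⟩
    · rw [Submodule.span_le]
      rintro _ ⟨⟨q, i⟩, hq, rfl⟩
      have hq : q = p := hq
      subst hq
      rw [hI.collectedBasis_coe]
      exact Subtype.prop _
  · rintro ⟨p, i⟩
    by_contra hp
    simp only [not_le] at hp
    have hb := (Module.Basis.ofVectorSpace K (G p)).ne_zero i
    apply hb
    have := ((Module.Basis.ofVectorSpace K (G p)) i).2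
    exact Subtype.ext ((Submodule.mem_bot K).1 ((hneg p hp).le this))
  · intro p
    have := hfin p
    have hf : Finite (Module.Basis.ofVectorSpaceIndex K (G p)) :=
      Module.Finite.finite_basis (Module.Basis.ofVectorSpace K (G p))
    refine Set.Finite.subset (Set.finite_range (fun i : Module.Basis.ofVectorSpaceIndex K (G p) =>
      (⟨p, i⟩ : (p : ℤ) × Module.Basis.ofVectorSpaceIndex K (G p)))) ?_
    rintro ⟨q, i⟩ hq
    have hq : q = p := hq
    subst hq
    exact ⟨i, rfl⟩

end GradedLA

open MvPolynomial TensorProduct CategoryTheory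

noncomputable section BarAlg
set_option linter.unusedSectionVars false

variable {K : Type} [Field K] {n : ℕ}
variable {D : Type} [AddCommGroup D] [Module K D]
variable {D' : Type} [AddCommGroup D'] [Module K D']
variable {M : Type} [AddCommGroup M] [Module K M] [Module (PS K n) M]
  [IsScalarTower K (PS K n) M]
variable {M' : Type} [AddCommGroup M'] [Module K M'] [Module (PS K n) M']
  [IsScalarTower K (PS K n) M']

variable (M) in
/-- The generic bar differential step. -/
def bs (c : PS K n ⊗[K] D →ₗ[K] D) : M ⊗[K] (PS K n ⊗[K] D) →ₗ[K] M ⊗[K] D :=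
  (TensorProduct.map (smulMapM K n M) LinearMap.id).comp
      (TensorProduct.assoc K M (PS K n) D).symm.toLinearMap
  - TensorProduct.map LinearMap.id c

theorem bs_tmul (c : PS K n ⊗[K] D →ₗ[K] D) (m : M) (s : PS K n) (t : D) :
    bs M c (m ⊗ₜ[K] (s ⊗ₜ[K] t)) = (s • m) ⊗ₜ[K] t - m ⊗ₜ[K] c (s ⊗ₜ[K] t) := rfl

theorem bs_ext {E : Type} [AddCommGroup E] [Module K E] {f g : M ⊗[K] (PS K n ⊗[K] D) →ₗ[K] E}
    (h : ∀ m s t, f (m ⊗ₜ[K] (s ⊗ₜ[K] t)) = g (m ⊗ₜ[K] (s ⊗ₜ[K] t))) : f = g := by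
  apply TensorProduct.ext'
  intro m u
  induction u using TensorProduct.induction_on with
  | zero => simp
  | tmul s t => exact h m s t
  | add x y hx hy => simp only [tmul_add, map_add, hx, hy]

theorem barB_eq (N : Type) [AddCommGroup N] [Module K N] [Module (PS K n) N]
    [IsScalarTower K (PS K n) N] (i : ℕ) : barB K n N M i = bs M (barC K n N i) := rfl

theorem barC_succ_eq (N : Type) [AddCommGroup N] [Module K N] [Module (PS K n) N]
    [IsScalarTower K (PS K n) N] (i : ℕ) :
    barC K n N (i + 1) = bs (PS K n) (barC K n N i) := by
  have : barC K n N (i + 1) =  (TensorProduct.map (LinearMap.mul' K (PS K n)) LinearMap.id).comp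
        (TensorProduct.assoc K (PS K n) (PS K n) (barD K n N i)).symm.toLinearMap
      - TensorProduct.map LinearMap.id (barC K n N i) := rfl
  rw [this]
  unfold bs
  congr 3
  apply TensorProduct.ext'
  intro a b
  simp [smulMapM, mul_comm]

/-- Associativity of `c`. -/
def Assoc (c : PS K n ⊗[K] D →ₗ[K] D) : Prop :=
  ∀ s s' t, c ((s * s') ⊗ₜ[K] t) = c (s ⊗ₜ[K] c (s' ⊗ₜ[K] t))

theorem Assoc.step {c : PS K n ⊗[K] D →ₗ[K] D} (h : Assoc c) :
    Assoc (n := n) (bs (PS K n) c) := by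
  intro s s' u
  induction u using TensorProduct.induction_on with
  | zero => simp
  | tmul a t =>
    have e := h s' a t
    simp only [bs_tmul, tmul_sub, map_sub, smul_eq_mul, ← e]
    have e1 : s' * a = a * s' := mul_comm _ _
    have : a * (s * s') = a * s' * s := by ring
    rw [this, mul_comm s' s, e1]
    abel
  | add x y hx hy => simp only [tmul_add, map_add, hx, hy]

theorem assoc_barC (N : Type) [AddCommGroup N] [Module K N] [Module (PS K n) N]
    [IsScalarTower K (PS K n) N] (i : ℕ) : Assoc (n := n) (barC K n N i) := by
  induction i with
  | zero => exact fun s s' (t : N) => mul_smul s s' t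
  | succ i ih =>
    rw [barC_succ_eq]
    exact ih.step

theorem bs_bs {c : PS K n ⊗[K] D →ₗ[K] D} (h : Assoc c) (x : M ⊗[K] (PS K n ⊗[K] (PS K n ⊗[K] D))) :
    bs M c (bs M (bs (PS K n) c) x) = 0 := by
  have : (bs M c).comp (bs M (bs (PS K n) c)) = 0 := by
    apply bs_ext
    intro m s u
    induction u using TensorProduct.induction_on with
    | zero => simp
    | tmul a t =>
      simp only [LinearMap.comp_apply, LinearMap.zero_apply, bs_tmul, tmul_sub, map_sub,
        smul_eq_mul, ← h s a t, mul_smul]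
      rw [mul_comm s a]
      abel
    | add x y hx hy =>
      simp only [tmul_add, map_add, hx, hy]
  exact LinearMap.congr_fun this x

theorem bs_natural {c : PS K n ⊗[K] D →ₗ[K] D} {c' : PS K n ⊗[K] D' →ₗ[K] D'}
    (h : PS K n →ₗ[K] PS K n) (f : M →ₗ[K] M') (ψ : D →ₗ[K] D')
    (hf : ∀ s m, f (s • m) = h s • f m)
    (hψ : ∀ x, ψ (c x) = c' (TensorProduct.map h ψ x)) (x : M ⊗[K] (PS K n ⊗[K] D)) :
    TensorProduct.map f ψ (bs M c x) =
      bs M' c' (TensorProduct.map f (TensorProduct.map h ψ) x) := by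
  have : (TensorProduct.map f ψ).comp (bs M c) =
      (bs M' c').comp (TensorProduct.map f (TensorProduct.map h ψ)) := by
    apply bs_ext
    intro m s t
    simp only [LinearMap.comp_apply, bs_tmul, map_sub, TensorProduct.map_tmul, hf, hψ]
  exact LinearMap.congr_fun this x

theorem bs_graded {c : PS K n ⊗[K] D →ₗ[K] D} {GM : ℤ → Submodule K M} {GD : ℤ → Submodule K D}
    (hM : ∀ p q, ∀ s ∈ polyGrade K n p, ∀ m ∈ GM q, s • m ∈ GM (p + q))
    (hc : ∀ p, (tensorGrade K (polyGrade K n) GD p).map c ≤ GD p) (p : ℤ) :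
    (tensorGrade K GM (tensorGrade K (polyGrade K n) GD) p).map (bs M c) ≤
      tensorGrade K GM GD p := by
  rw [Submodule.map_le_iff_le_comap]
  apply tensorGrade_le
  intro q r hqr m hm u hu
  rw [tensorGrade_eq_span] at hu
  induction hu using Submodule.span_induction with
  | zero => simp
  | mem x hx =>
    obtain ⟨q', s, hs, t, ht, rfl⟩ := hx
    rw [Submodule.mem_comap, bs_tmul]
    refine sub_mem ?_ ?_
    · exact tmul_mem_tensorGrade (p := q' + q) (by omega) (hM _ _ s hs m hm) ht
    · refine tmul_mem_tensorGrade hqr hm (hc _ ⟨_, ?_, rfl⟩)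
      exact tmul_mem_tensorGrade (by omega) hs ht
  | add x y _ _ hx hy => rw [tmul_add]; exact add_mem hx hy
  | smul c x _ hx => rw [tmul_smul]; exact Submodule.smul_mem _ _ hx

theorem polyGrade_mul (p q : ℤ) (s t : PS K n) (hs : s ∈ polyGrade K n p)
    (ht : t ∈ polyGrade K n q) : s * t ∈ polyGrade K n (p + q) := by
  unfold polyGrade at *
  by_cases hp : 0 ≤ p
  · by_cases hq : 0 ≤ q
    · rw [if_pos hp] at hs
      rw [if_pos hq] at ht
      rw [if_pos (by omega), Int.toNat_add hp hq]
      exact MvPolynomial.IsHomogeneous.mul hs ht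
    · rw [if_neg hq] at ht
      rw [(Submodule.mem_bot K).1 ht, mul_zero]; exact zero_mem _
  · rw [if_neg hp] at hs
    rw [(Submodule.mem_bot K).1 hs, zero_mul]; exact zero_mem _

theorem barC_graded {N : Type} [AddCommGroup N] [Module K N] [Module (PS K n) N]
    [IsScalarTower K (PS K n) N] {GN : ℤ → Submodule K N}
    (hN : ∀ p q, ∀ s ∈ polyGrade K n p, ∀ m ∈ GN q, s • m ∈ GN (p + q)) (i : ℕ) (p : ℤ) :
    (tensorGrade K (polyGrade K n) (barDGrade K n N GN i) p).map (barC K n N i) ≤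
      barDGrade K n N GN i p := by
  induction i generalizing p with
  | zero =>
    refine Submodule.map_le_iff_le_comap.2 (tensorGrade_le ?_)
    intro q r hqr s hs m hm
    subst hqr
    exact hN q r s hs m hm
  | succ i ih =>
    rw [barC_succ_eq]
    exact bs_graded (fun p q s hs m hm => polyGrade_mul p q s m hs hm) ih p

theorem barB_graded {N : Type} [AddCommGroup N] [Module K N] [Module (PS K n) N]
    [IsScalarTower K (PS K n) N] {GN : ℤ → Submodule K N} {GM : ℤ → Submodule K M}
    (hN : ∀ p q, ∀ s ∈ polyGrade K n p, ∀ m ∈ GN q, s • m ∈ GN (p + q))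
    (hM : ∀ p q, ∀ s ∈ polyGrade K n p, ∀ m ∈ GM q, s • m ∈ GM (p + q)) (i : ℕ) (p : ℤ) :
    (tensorGrade K GM (barDGrade K n N GN (i + 1)) p).map (barB K n N M i) ≤
      tensorGrade K GM (barDGrade K n N GN i) p :=
  bs_graded hM (barC_graded hN i) p

/-- Functoriality of the tower. -/
def barMap {N N' : Type} [AddCommGroup N] [Module K N] [AddCommGroup N'] [Module K N']
    (h : PS K n →ₗ[K] PS K n) (φ : N →ₗ[K] N') : (i : ℕ) → barD K n N i →ₗ[K] barD K n N' i
  | 0 => φ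
  | (i + 1) => TensorProduct.map h (barMap h φ i)

theorem barMap_barC {N N' : Type} [AddCommGroup N] [Module K N] [AddCommGroup N'] [Module K N']
    [Module (PS K n) N] [IsScalarTower K (PS K n) N]
    [Module (PS K n) N'] [IsScalarTower K (PS K n) N']
    (h : PS K n →ₐ[K] PS K n) (φ : N →ₗ[K] N') (hφ : ∀ (s : PS K n) x, φ (s • x) = h s • φ x)
    (i : ℕ) (x : PS K n ⊗[K] barD K n N i) :
    barMap h.toLinearMap φ i (barC K n N i x) =
      barC K n N' i (TensorProduct.map h.toLinearMap (barMap h.toLinearMap φ i) x) := by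
  induction i with
  | zero =>
    have : (φ.comp (TensorProduct.lift (smulBilin K n N))) =
      (TensorProduct.lift (smulBilin K n N')).comp (TensorProduct.map h.toLinearMap φ) := by
      apply TensorProduct.ext'
      intro s x
      exact hφ s x
    exact LinearMap.congr_fun this x
  | succ i ih =>
    rw [barC_succ_eq, barC_succ_eq]
    exact bs_natural h.toLinearMap h.toLinearMap (barMap h.toLinearMap φ i)
      (fun s m => map_mul h s m) ih x

theorem barMap_barB {N N' : Type} [AddCommGroup N] [Module K N] [AddCommGroup N'] [Module K N']
    [Module (PS K n) N] [IsScalarTower K (PS K n) N]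
    [Module (PS K n) N'] [IsScalarTower K (PS K n) N']
    (h : PS K n →ₐ[K] PS K n) (f : M →ₗ[K] M') (φ : N →ₗ[K] N')
    (hf : ∀ (s : PS K n) m, f (s • m) = h s • f m)
    (hφ : ∀ (s : PS K n) x, φ (s • x) = h s • φ x)
    (i : ℕ) (x : M ⊗[K] barD K n N (i + 1)) :
    TensorProduct.map f (barMap h.toLinearMap φ i) (barB K n N M i x) =
      barB K n N' M' i (TensorProduct.map f (barMap h.toLinearMap φ (i + 1)) x) :=
  bs_natural h.toLinearMap f (barMap h.toLinearMap φ i) hf (barMap_barC h φ hφ i) x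

theorem barMap_grade_le {N N' : Type} [AddCommGroup N] [Module K N] [AddCommGroup N']
    [Module K N'] {GN : ℤ → Submodule K N} {GN' : ℤ → Submodule K N'}
    (h : PS K n →ₗ[K] PS K n) (φ : N →ₗ[K] N')
    (hh : ∀ p, (polyGrade K n p).map h ≤ polyGrade K n p) (hφ : ∀ p, (GN p).map φ ≤ GN' p)
    (i : ℕ) (p : ℤ) :
    (barDGrade K n N GN i p).map (barMap h φ i) ≤ barDGrade K n N' GN' i p := by
  induction i generalizing p with
  | zero => exact hφ p
  | succ i ih => exact map_tensorGrade_le h (barMap h φ i) hh ih p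

theorem barMap_grade_eq {N N' : Type} [AddCommGroup N] [Module K N] [AddCommGroup N']
    [Module K N'] {GN : ℤ → Submodule K N} {GN' : ℤ → Submodule K N'}
    (h : PS K n →ₗ[K] PS K n) (φ : N →ₗ[K] N')
    (hh : ∀ p, (polyGrade K n p).map h = polyGrade K n p) (hφ : ∀ p, (GN p).map φ = GN' p)
    (i : ℕ) (p : ℤ) :
    (barDGrade K n N GN i p).map (barMap h φ i) = barDGrade K n N' GN' i p := by
  induction i generalizing p with
  | zero => exact hφ p
  | succ i ih => exact map_tensorGrade_eq h (barMap h φ i) hh ih p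

theorem barMap_injective {N N' : Type} [AddCommGroup N] [Module K N] [AddCommGroup N']
    [Module K N'] (h : PS K n →ₗ[K] PS K n) (φ : N →ₗ[K] N')
    (hh : Function.Injective h) (hφ : Function.Injective φ)
    (i : ℕ) : Function.Injective (barMap h φ i) := by
  induction i with
  | zero => exact hφ
  | succ i ih => exact TensorProduct.map_injective_of_flat_flat h (barMap h φ i) hh ih

theorem barMap_surjective {N N' : Type} [AddCommGroup N] [Module K N] [AddCommGroup N']
    [Module K N'] (h : PS K n →ₗ[K] PS K n) (φ : N →ₗ[K] N')
    (hh : Function.Surjective h) (hφ : Function.Surjective φ)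
    (i : ℕ) : Function.Surjective (barMap h φ i) := by
  induction i with
  | zero => exact hφ
  | succ i ih => exact TensorProduct.map_surjective hh ih

theorem barMap_exact {N N' N'' : Type} [AddCommGroup N] [Module K N] [AddCommGroup N']
    [Module K N'] [AddCommGroup N''] [Module K N''] (φ : N →ₗ[K] N') (ψ : N' →ₗ[K] N'')
    (hψ : Function.Surjective ψ) (he : Function.Exact φ ψ) (i : ℕ) :
    Function.Exact (barMap (n := n) LinearMap.id φ i) (barMap (n := n) LinearMap.id ψ i) := by
  induction i with
  | zero => exact he
  | succ i ih =>
    exact lTensor_exact (PS K n) ih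
      (barMap_surjective LinearMap.id ψ Function.surjective_id hψ i)

end BarAlg

open MvPolynomial TensorProduct CategoryTheory

noncomputable section Vanish
set_option linter.unusedSectionVars false

variable {K : Type} [Field K] {n : ℕ}
variable {M : Type} [AddCommGroup M] [Module K M] [Module (PS K n) M]
  [IsScalarTower K (PS K n) M]
variable {D : Type} [AddCommGroup D] [Module K D]

theorem one_mem_polyGrade : (1 : PS K n) ∈ polyGrade K n 0 := by
  unfold polyGrade
  rw [if_pos le_rfl]
  exact MvPolynomial.isHomogeneous_one _ _

theorem smul_tensorGrade (GM : ℤ → Submodule K M) (p q : ℤ) (s : PS K n)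
    (hs : s ∈ polyGrade K n p) (a : PS K n ⊗[K] M)
    (ha : a ∈ tensorGrade K (polyGrade K n) GM q) :
    s • a ∈ tensorGrade K (polyGrade K n) GM (p + q) := by
  rw [tensorGrade_eq_span] at ha
  induction ha using Submodule.span_induction with
  | zero => simp
  | mem x hx =>
    obtain ⟨q', s', hs', t, ht, rfl⟩ := hx
    rw [smul_tmul']
    exact tmul_mem_tensorGrade (p := p + q') (by omega) (polyGrade_mul _ _ _ _ hs hs') ht
  | add x y _ _ hx hy => rw [smul_add]; exact add_mem hx hy
  | smul c x _ hx => rw [smul_comm]; exact Submodule.smul_mem _ _ hx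

variable (K n M D) in
/-- The contracting homotopy for an induced module. -/
def kap : (PS K n ⊗[K] M) ⊗[K] D →ₗ[K] (PS K n ⊗[K] M) ⊗[K] (PS K n ⊗[K] D) :=
  (TensorProduct.map (TensorProduct.mk K (PS K n) M 1) LinearMap.id).comp
    ((TensorProduct.assoc K M (PS K n) D).toLinearMap.comp
      (TensorProduct.map (TensorProduct.comm K (PS K n) M).toLinearMap LinearMap.id))

theorem kap_tmul (s : PS K n) (m : M) (t : D) :
    kap K n M D ((s ⊗ₜ[K] m) ⊗ₜ[K] t) = ((1 : PS K n) ⊗ₜ[K] m) ⊗ₜ[K] (s ⊗ₜ[K] t) := rfl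

theorem kap_homotopy (c : PS K n ⊗[K] D →ₗ[K] D)
    (y : (PS K n ⊗[K] M) ⊗[K] (PS K n ⊗[K] D)) :
    bs (PS K n ⊗[K] M) (bs (PS K n) c) (kap K n M (PS K n ⊗[K] D) y) +
      kap K n M D (bs (PS K n ⊗[K] M) c y) = y := by
  have : (bs (PS K n ⊗[K] M) (bs (PS K n) c)).comp (kap K n M (PS K n ⊗[K] D)) +
      (kap K n M D).comp (bs (PS K n ⊗[K] M) c) = LinearMap.id := by
    refine bs_ext (K := K) (n := n) (M := PS K n ⊗[K] M) (D := D)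
      (E := (PS K n ⊗[K] M) ⊗[K] (PS K n ⊗[K] D)) ?_
    intro a s t
    induction a using TensorProduct.induction_on with
    | zero => simp
    | tmul s' m =>
      simp only [LinearMap.add_apply, LinearMap.comp_apply, bs_tmul, map_sub, kap_tmul,
        LinearMap.id_apply, tmul_sub, smul_tmul', smul_eq_mul, mul_one]
      abel
    | add x y hx hy => simp only [add_tmul, map_add, hx, hy]
  exact LinearMap.congr_fun this y

variable (K n M) in
/-- The action map `S ⊗ M → M`. -/
def actL : PS K n ⊗[K] M →ₗ[K] M := TensorProduct.lift (smulBilin K n M)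

theorem actL_tmul (s : PS K n) (m : M) : actL K n M (s ⊗ₜ m) = s • m := rfl

theorem actL_smul (s : PS K n) (a : PS K n ⊗[K] M) : actL K n M (s • a) = s • actL K n M a := by
  induction a using TensorProduct.induction_on with
  | zero => simp
  | tmul s' m => rw [smul_tmul', actL_tmul, actL_tmul, smul_eq_mul, mul_smul]
  | add x y hx hy => simp only [smul_add, map_add, hx, hy]

variable (K n M) in
/-- The kernel of the action map. -/
def kerActS : Submodule (PS K n) (PS K n ⊗[K] M) where
  carrier := {a | actL K n M a = 0}
  add_mem' := by
    intro a b ha hb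
    have ha : actL K n M a = 0 := ha
    have hb : actL K n M b = 0 := hb
    change actL K n M (a + b) = 0
    rw [map_add, ha, hb, add_zero]
  zero_mem' := map_zero _
  smul_mem' := by
    intro s a ha
    have ha : actL K n M a = 0 := ha
    change actL K n M (s • a) = 0
    rw [actL_smul, ha, smul_zero]

variable (K n M) in
/-- The kernel of the action map, as a type. -/
def kerAct : Type := ↥(kerActS K n M)

instance : AddCommGroup (kerAct K n M) := inferInstanceAs (AddCommGroup ↥(kerActS K n M))
instance : Module K (kerAct K n M) := inferInstanceAs (Module K ↥(kerActS K n M))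
instance : Module (PS K n) (kerAct K n M) := inferInstanceAs (Module (PS K n) ↥(kerActS K n M))
instance : IsScalarTower K (PS K n) (kerAct K n M) :=
  inferInstanceAs (IsScalarTower K (PS K n) ↥(kerActS K n M))

variable (K n M) in
/-- inclusion of the kernel -/
def kincl : kerAct K n M →ₗ[K] PS K n ⊗[K] M := (kerActS K n M).subtype.restrictScalars K

variable (K n M) in
/-- retraction onto the kernel -/
def kret : PS K n ⊗[K] M →ₗ[K] kerAct K n M :=
  LinearMap.codRestrict ((kerActS K n M).restrictScalars K)
    (LinearMap.id - (TensorProduct.mk K (PS K n) M 1).comp (actL K n M)) (by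
      intro a
      change actL K n M (a - (1 : PS K n) ⊗ₜ[K] actL K n M a) = 0
      rw [map_sub, actL_tmul, one_smul, sub_self])

theorem kincl_kret (a : PS K n ⊗[K] M) :
    kincl K n M (kret K n M a) = a - (1 : PS K n) ⊗ₜ[K] actL K n M a := rfl

theorem kret_smul_grade (GM : ℤ → Submodule K M)
    (hM : ∀ p q, ∀ s ∈ polyGrade K n p, ∀ m ∈ GM q, s • m ∈ GM (p + q)) :
    ∀ p q, ∀ s ∈ polyGrade K n p,
      ∀ m ∈ (tensorGrade K (polyGrade K n) GM q).map (kret K n M),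
      s • m ∈ (tensorGrade K (polyGrade K n) GM (p + q)).map (kret K n M) := by
  have hone : (1 : PS K n) ∈ polyGrade K n 0 := one_mem_polyGrade
  have hact : ∀ q, ∀ a ∈ tensorGrade K (polyGrade K n) GM q, actL K n M a ∈ GM q := by
    intro q
    have : tensorGrade K (polyGrade K n) GM q ≤ (GM q).comap (actL K n M) :=
      tensorGrade_le fun a b h s hs m hm => by subst h; exact hM a b s hs m hm
    exact this
  rintro p q s hs _ ⟨a, ha, rfl⟩
  refine ⟨s • (a - (1 : PS K n) ⊗ₜ[K] actL K n M a), ?_, ?_⟩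
  · apply smul_tensorGrade GM _ _ _ hs
    refine sub_mem ha (tmul_mem_tensorGrade (zero_add q) hone (hact q a ha))
  · apply Subtype.ext
    change kincl K n M (kret K n M (s • (a - (1 : PS K n) ⊗ₜ[K] actL K n M a))) =
      s • kincl K n M (kret K n M a)
    rw [kincl_kret, kincl_kret, actL_smul, map_sub, actL_tmul, one_smul, sub_self, smul_zero,
      tmul_zero, sub_zero]

theorem kret_grade_bot (GM : ℤ → Submodule K M) (d : ℤ) (hd : ∀ p < d, GM p = ⊥) (p : ℤ)
    (hp : p < d + 1) : (tensorGrade K (polyGrade K n) GM p).map (kret K n M) = ⊥ := by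
  rw [eq_bot_iff, Submodule.map_le_iff_le_comap]
  apply tensorGrade_le
  intro q r hqr s hs m hm
  rw [Submodule.mem_comap, Submodule.mem_bot]
  by_cases hr : r < d
  · rw [hd r hr, Submodule.mem_bot] at hm
    simp [hm]
  · unfold polyGrade at hs
    split_ifs at hs with hq
    · have : q = 0 := by omega
      subst this
      have hs : s.IsHomogeneous 0 := hs
      have hs : s.totalDegree = 0 := Nat.le_zero.1 hs.totalDegree_le
      rw [MvPolynomial.totalDegree_eq_zero_iff_eq_C] at hs
      apply Subtype.ext
      change kincl K n M (kret K n M (s ⊗ₜ[K] m)) = 0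
      rw [kincl_kret, actL_tmul, hs, ← mul_one (C (coeff 0 s)), ← MvPolynomial.smul_eq_C_mul,
        smul_assoc, one_smul, smul_tmul, sub_self]
    · rw [(Submodule.mem_bot K).1 hs]; simp

/-- Vanishing of the homology of the bar complex in low degree. -/
theorem bar_vanish {N : Type} [AddCommGroup N] [Module K N] [Module (PS K n) N]
    [IsScalarTower K (PS K n) N] (GN : ℤ → Submodule K N)
    (hN : ∀ p q, ∀ s ∈ polyGrade K n p, ∀ m ∈ GN q, s • m ∈ GN (p + q))
    (hN0 : ∀ p < 0, GN p = ⊥) (j : ℤ) (i : ℕ) :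
    ∀ (M : Type) [AddCommGroup M] [Module K M] [Module (PS K n) M] [IsScalarTower K (PS K n) M]
      (GM : ℤ → Submodule K M) (d : ℤ)
      (_ : ∀ p q, ∀ s ∈ polyGrade K n p, ∀ m ∈ GM q, s • m ∈ GM (p + q))
      (_ : ∀ p < d, GM p = ⊥) (_ : j < d + i)
      (x : M ⊗[K] barD K n N i), x ∈ tensorGrade K GM (barDGrade K n N GN i) j →
      (∀ k (e : i = k + 1), barB K n N M k (e ▸ x) = 0) →
      x ∈ LinearMap.range (barB K n N M i) := by
  induction i with
  | zero =>
    intro M _ _ _ _ GM d hM hd hj x hx _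
    have : tensorGrade K GM (barDGrade K n N GN 0) j ≤ ⊥ := by
      refine tensorGrade_le ?_
      intro p q hpq m hm t ht
      by_cases hp : p < d
      · rw [hd p hp, Submodule.mem_bot] at hm
        rw [hm, zero_tmul]; exact zero_mem _
      · have hq : q < 0 := by push_cast at hj; omega
        have ht0 : t = 0 := (Submodule.mem_bot K).1 ((hN0 q hq).le ht)
        have ht1 : m ⊗ₜ[K] t = 0 := by rw [ht0, tmul_zero]
        rw [ht1]; exact zero_mem _
    rw [(Submodule.mem_bot K).1 (this hx)]
    exact zero_mem _
  | succ i ih =>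
    intro M _ _ _ _ GM d hM hd hj x hx hcyc
    have hx0 : barB K n N M i x = 0 := hcyc i rfl
    -- the lift of x
    let η : M →ₗ[K] (PS K n ⊗[K] M) := TensorProduct.mk K (PS K n) M 1
    let y : (PS K n ⊗[K] M) ⊗[K] barD K n N (i + 1) := TensorProduct.map η LinearMap.id x
    have hμη : ∀ m, actL K n M (η m) = m := fun m => one_smul _ m
    have hμy : TensorProduct.map (actL K n M) LinearMap.id y = x := by
      have : (TensorProduct.map (actL K n M) LinearMap.id).comp (TensorProduct.map η LinearMap.id)
          = (LinearMap.id : M ⊗[K] barD K n N (i + 1) →ₗ[K] _) := by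
        apply TensorProduct.ext'
        intro m t
        simp [hμη]
      exact LinearMap.congr_fun this x
    have hnat : ∀ (k : ℕ) (u : (PS K n ⊗[K] M) ⊗[K] barD K n N (k + 1)),
        TensorProduct.map (actL K n M) LinearMap.id (barB K n N (PS K n ⊗[K] M) k u) =
          barB K n N M k (TensorProduct.map (actL K n M) LinearMap.id u) := by
      intro k u
      have := bs_natural (c := barC K n N k) (c' := barC K n N k) LinearMap.id (actL K n M)
        LinearMap.id (fun s m => actL_smul s m) (fun x => by rw [TensorProduct.map_id]; rfl) u
      rw [TensorProduct.map_id] at this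
      exact this
    have hnat' : ∀ (k : ℕ) (u : kerAct K n M ⊗[K] barD K n N (k + 1)),
        TensorProduct.map (kincl K n M) LinearMap.id (barB K n N (kerAct K n M) k u) =
          barB K n N (PS K n ⊗[K] M) k (TensorProduct.map (kincl K n M) LinearMap.id u) := by
      intro k u
      have := bs_natural (c := barC K n N k) (c' := barC K n N k) LinearMap.id (kincl K n M)
        LinearMap.id (fun s m => rfl) (fun x => by rw [TensorProduct.map_id]; rfl) u
      rw [TensorProduct.map_id] at this
      exact this
    let z := barB K n N (PS K n ⊗[K] M) i y
    let GA := tensorGrade K (polyGrade K n) GM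
    have hone : (1 : PS K n) ∈ polyGrade K n 0 := one_mem_polyGrade
    have hGA : ∀ p q, ∀ s ∈ polyGrade K n p, ∀ m ∈ GA q, s • m ∈ GA (p + q) := by
      intro p q s hs a ha
      exact smul_tensorGrade GM p q s hs a ha
    have hy : y ∈ tensorGrade K GA (barDGrade K n N GN (i + 1)) j := by
      refine map_tensorGrade_le η LinearMap.id ?_ ?_ j ⟨x, hx, rfl⟩
      · rintro p _ ⟨m, hm, rfl⟩
        exact tmul_mem_tensorGrade (zero_add p) hone hm
      · intro p; rw [Submodule.map_id]
    have hz : z ∈ tensorGrade K GA (barDGrade K n N GN i) j :=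
      barB_graded hN hGA i j ⟨y, hy, rfl⟩
    let z' := TensorProduct.map (kret K n M) LinearMap.id z
    have hz' : z' ∈ tensorGrade K (fun p => (GA p).map (kret K n M)) (barDGrade K n N GN i) j := by
      refine map_tensorGrade_le (kret K n M) LinearMap.id (fun p => le_rfl) ?_ j ⟨z, hz, rfl⟩
      intro p; rw [Submodule.map_id]
    have hzz : TensorProduct.map (kincl K n M) LinearMap.id z' = z := by
      have e : ∀ u : (PS K n ⊗[K] M) ⊗[K] barD K n N i,
          TensorProduct.map (kincl K n M) LinearMap.id
            (TensorProduct.map (kret K n M) LinearMap.id u) +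
          TensorProduct.map η LinearMap.id
            (TensorProduct.map (actL K n M) LinearMap.id u) = u := by
        intro u
        induction u using TensorProduct.induction_on with
        | zero => simp only [map_zero, add_zero]
        | tmul a t =>
          simp only [TensorProduct.map_tmul, kincl_kret, LinearMap.id_apply, sub_tmul]
          exact sub_add_cancel _ _
        | add x y hx hy =>
          simp only [map_add]
          rw [add_add_add_comm, hx, hy]
      have e' := e z
      have h0 : TensorProduct.map (actL K n M) LinearMap.id z = 0 := by
        rw [hnat i y, hμy, hx0]
      rw [h0, map_zero, add_zero] at e'
      exact e'
    have hinj : ∀ k, Function.Injective (TensorProduct.map (kincl K n M)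
        (LinearMap.id : barD K n N k →ₗ[K] barD K n N k)) := fun k =>
      TensorProduct.map_injective_of_flat_flat _ _ Subtype.val_injective Function.injective_id
    obtain ⟨w, hw⟩ := ih (kerAct K n M) (fun p => (GA p).map (kret K n M)) (d + 1)
      (kret_smul_grade GM hM) (kret_grade_bot GM d hd) (by push_cast at hj; omega) z' hz' (by
        intro k e
        subst e
        apply hinj k
        rw [map_zero]
        change TensorProduct.map (kincl K n M) LinearMap.id (barB K n N (kerAct K n M) k z') = 0
        rw [hnat', hzz]
        change bs (PS K n ⊗[K] M) (barC K n N k) (bs (PS K n ⊗[K] M) (barC K n N (k + 1)) y) = 0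
        rw [barC_succ_eq]
        exact bs_bs (assoc_barC N k) y)
    let y' := y - TensorProduct.map (kincl K n M) LinearMap.id w
    have hy' : barB K n N (PS K n ⊗[K] M) i y' = 0 := by
      change barB K n N (PS K n ⊗[K] M) i (y - TensorProduct.map (kincl K n M) LinearMap.id w) = 0
      rw [map_sub, ← hnat', hw, hzz, sub_self]
    have hex := kap_homotopy (M := M) (barC K n N i) y'
    have hy2 : bs (PS K n ⊗[K] M) (barC K n N i) y' = 0 := hy'
    rw [hy2, map_zero, add_zero] at hex
    let v : (PS K n ⊗[K] M) ⊗[K] barD K n N (i + 1 + 1) := kap K n M (barD K n N (i + 1)) y'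
    refine ⟨TensorProduct.map (actL K n M) LinearMap.id v, ?_⟩
    have hex' : barB K n N (PS K n ⊗[K] M) (i + 1) v = y' := by
      rw [barB_eq, barC_succ_eq]
      exact hex
    rw [← hnat (i + 1), hex']
    change TensorProduct.map (actL K n M) LinearMap.id
      (y - TensorProduct.map (kincl K n M) LinearMap.id w) = x
    rw [map_sub, hμy]
    have e : (TensorProduct.map (actL K n M) LinearMap.id).comp
        (TensorProduct.map (kincl K n M) LinearMap.id) =
        (0 : kerAct K n M ⊗[K] barD K n N (i + 1) →ₗ[K] _) := by
      apply TensorProduct.ext'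
      intro a t
      have : actL K n M (kincl K n M a) = 0 := a.2
      simp [this]
    have e' := LinearMap.congr_fun e w
    rw [LinearMap.comp_apply] at e'
    rw [e', LinearMap.zero_apply, sub_zero]

end Vanish

open MvPolynomial TensorProduct CategoryTheory

noncomputable section GoodGr
set_option linter.unusedSectionVars false

variable {K : Type} [Field K] {n : ℕ}

variable (K n) in
/-- Projection to a graded piece of the polynomial ring. -/
def polyProj (p : ℤ) : PS K n →ₗ[K] PS K n :=
  if 0 ≤ p then homogeneousComponent p.toNat else 0

theorem polyGrade_nonneg {p : ℤ} (hp : 0 ≤ p) :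
    polyGrade K n p = homogeneousSubmodule (Fin n) K p.toNat := if_pos hp

theorem polyGrade_nat (d : ℕ) :
    polyGrade K n (d : ℤ) = homogeneousSubmodule (Fin n) K d := by
  rw [polyGrade_nonneg (Int.natCast_nonneg d), Int.toNat_natCast]

theorem polyGrade_neg {p : ℤ} (hp : p < 0) : polyGrade K n p = ⊥ := if_neg (by omega)

theorem polyProj_mem (p : ℤ) (x : PS K n) : polyProj K n p x ∈ polyGrade K n p := by
  unfold polyProj polyGrade
  split_ifs with h
  · exact homogeneousComponent_isHomogeneous _ _
  · simp

theorem polyProj_self (p : ℤ) (x : PS K n) (hx : x ∈ polyGrade K n p) : polyProj K n p x = x := by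
  unfold polyProj
  unfold polyGrade at hx
  split_ifs at hx ⊢ with h
  · rw [homogeneousComponent_of_mem hx, if_pos rfl]
  · rw [(Submodule.mem_bot K).1 hx, map_zero]

theorem polyProj_ne (p q : ℤ) (hq : q ≠ p) (x : PS K n) (hx : x ∈ polyGrade K n q) :
    polyProj K n p x = 0 := by
  unfold polyProj
  unfold polyGrade at hx
  split_ifs at hx ⊢ with h h'
  · rw [homogeneousComponent_of_mem hx, if_neg (by omega)]
  · rw [(Submodule.mem_bot K).1 hx, map_zero]
  · rfl
  · rfl

theorem polyGrade_sum (x : PS K n) : ∃ s : Finset ℤ, x = ∑ p ∈ s, polyProj K n p x := by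
  refine ⟨(Finset.range (x.totalDegree + 1)).map Nat.castEmbedding, ?_⟩
  rw [Finset.sum_map]
  conv_lhs => rw [← sum_homogeneousComponent x]
  refine Finset.sum_congr rfl fun i _ => ?_
  simp [polyProj]

theorem polyGrade_iSup : iSup (polyGrade K n) = ⊤ := by
  rw [eq_top_iff]
  rintro x -
  obtain ⟨s, hs⟩ := polyGrade_sum x
  rw [hs]
  exact sum_mem fun p _ => Submodule.mem_iSup_of_mem p (polyProj_mem p x)

theorem polyGrade_finite (p : ℤ) : FiniteDimensional K (polyGrade K n p) := by
  by_cases h : 0 ≤ p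
  · rw [polyGrade_nonneg h]
    exact Module.Finite.iff_fg.2 (homogeneousSubmodule_fg _ _ p.toNat)
  · rw [polyGrade_neg (by omega)]
    infer_instance

theorem good_poly : Good (polyGrade K n) :=
  good_of_proj _ (polyProj K n) polyProj_self polyProj_ne polyGrade_iSup (fun _ h => polyGrade_neg h)
    polyGrade_finite

theorem IsHomog.polyProj {I : Ideal (PS K n)} (hI : IsHomog K n I) (p : ℤ) (x : PS K n)
    (hx : x ∈ I) : polyProj K n p x ∈ I := by
  unfold _root_.polyProj
  split_ifs
  · exact hI x hx _
  · exact zero_mem _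

variable (K n) in
/-- Inclusion of an ideal. -/
def inc (I : Ideal (PS K n)) : ↥I →ₗ[K] PS K n := (Submodule.subtype I).restrictScalars K

theorem inc_inj (I : Ideal (PS K n)) : Function.Injective (inc K n I) := Subtype.val_injective

theorem mem_idealGrade {I : Ideal (PS K n)} {p : ℤ} {x : I} :
    x ∈ idealGrade K n I p ↔ (x : PS K n) ∈ polyGrade K n p := Iff.rfl

variable (K n) in
/-- Quotient map -/
def qmk (J : Ideal (PS K n)) : PS K n →ₗ[K] PS K n ⧸ J := (Ideal.Quotient.mkₐ K J).toLinearMap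

theorem qmk_surj (J : Ideal (PS K n)) : Function.Surjective (qmk K n J) :=
  Ideal.Quotient.mk_surjective

theorem qmk_eq_zero {J : Ideal (PS K n)} {x : PS K n} : qmk K n J x = 0 ↔ x ∈ J :=
  Ideal.Quotient.eq_zero_iff_mem

theorem qmk_smul (J : Ideal (PS K n)) (s x : PS K n) : qmk K n J (s * x) = s • qmk K n J x := rfl

theorem inc_qmk_exact (J : Ideal (PS K n)) : Function.Exact (inc K n J) (qmk K n J) := by
  intro x
  rw [qmk_eq_zero]
  exact ⟨fun h => ⟨⟨x, h⟩, rfl⟩, by rintro ⟨y, rfl⟩; exact y.2⟩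

theorem good_ideal {I : Ideal (PS K n)} (hI : IsHomog K n I) : Good (idealGrade K n I) := by
  have hfin : ∀ p, FiniteDimensional K (idealGrade K n I p) := by
    intro p
    have := polyGrade_finite (K := K) (n := n) p
    have h2 : FiniteDimensional K ((idealGrade K n I p).map (inc K n I)) := by
      refine Submodule.finiteDimensional_of_le (S₂ := polyGrade K n p) ?_
      rintro _ ⟨x, hx, rfl⟩
      exact hx
    exact (Submodule.equivMapOfInjective (inc K n I) (inc_inj I) _).symm.finiteDimensional
  let π : ℤ → ↥I →ₗ[K] ↥I := fun p =>
    LinearMap.codRestrict (I.restrictScalars K) ((polyProj K n p).comp (inc K n I))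
      (fun x => hI.polyProj p x x.2)
  have hπ : ∀ p x, ((π p x : I) : PS K n) = polyProj K n p x := fun _ _ => rfl
  refine good_of_proj _ π ?_ ?_ ?_ ?_ hfin
  · intro p x hx
    exact Subtype.ext (polyProj_self p (x : PS K n) hx)
  · intro p q hq x hx
    exact Subtype.ext (polyProj_ne p q hq (x : PS K n) hx)
  · rw [eq_top_iff]
    rintro x -
    obtain ⟨s, hs⟩ := polyGrade_sum (x : PS K n)
    have : x = ∑ p ∈ s, π p x := by
      apply inc_inj
      rw [map_sum]
      exact hs
    rw [this]
    exact sum_mem fun p _ => Submodule.mem_iSup_of_mem p (polyProj_mem p (x : PS K n))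
  · intro p hp
    rw [eq_bot_iff]
    intro x hx
    have hx : (x : PS K n) ∈ polyGrade K n p := hx
    rw [polyGrade_neg hp] at hx
    exact Subtype.ext ((Submodule.mem_bot K).1 hx)

theorem good_quot {J : Ideal (PS K n)} (hJ : IsHomog K n J) : Good (quotGrade K n J) := by
  obtain ⟨s, hs⟩ := LinearMap.exists_rightInverse_of_surjective (qmk K n J)
    (LinearMap.range_eq_top.2 (qmk_surj J))
  let π : ℤ → (PS K n ⧸ J) →ₗ[K] (PS K n ⧸ J) := fun p => (qmk K n J).comp ((polyProj K n p).comp s)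
  have hπ : ∀ p x, π p (qmk K n J x) = qmk K n J (polyProj K n p x) := by
    intro p x
    change qmk K n J (polyProj K n p (s (qmk K n J x))) = _
    rw [← sub_eq_zero, ← map_sub, ← map_sub, qmk_eq_zero]
    apply hJ.polyProj
    rw [← qmk_eq_zero, map_sub, sub_eq_zero]
    exact LinearMap.congr_fun hs _
  refine good_of_proj _ π ?_ ?_ ?_ ?_ ?_
  · rintro p _ ⟨x, hx, rfl⟩
    exact (hπ p x).trans (by rw [polyProj_self p x hx]; rfl)
  · rintro p q hq _ ⟨x, hx, rfl⟩
    exact (hπ p x).trans (by rw [polyProj_ne p q hq x hx, map_zero])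
  · have : iSup (quotGrade K n J) = (iSup (polyGrade K n)).map (qmk K n J) := by
      rw [Submodule.map_iSup]; rfl
    rw [this, polyGrade_iSup, Submodule.map_top, LinearMap.range_eq_top.2 (qmk_surj J)]
  · intro p hp
    unfold quotGrade
    rw [polyGrade_neg hp, Submodule.map_bot]
  · intro p
    have := polyGrade_finite (K := K) (n := n) p
    unfold quotGrade
    infer_instance

theorem map_inc_grade (I : Ideal (PS K n)) (p : ℤ) :
    (idealGrade K n I p).map (inc K n I) = LinearMap.ker (qmk K n I) ⊓ polyGrade K n p := by
  ext x
  constructor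
  · rintro ⟨y, hy, rfl⟩
    exact ⟨qmk_eq_zero.2 y.2, hy⟩
  · rintro ⟨h1, h2⟩
    exact ⟨⟨x, qmk_eq_zero.1 h1⟩, h2, rfl⟩

theorem finrank_quot_add (J : Ideal (PS K n)) (p : ℤ) :
    Module.finrank K (quotGrade K n J p) + Module.finrank K (idealGrade K n J p) =
      Module.finrank K (polyGrade K n p) := by
  have := polyGrade_finite (K := K) (n := n) p
  have h := finrank_map_add_inf (qmk K n J) (polyGrade K n p)
  rw [← map_inc_grade, finrank_map_of_injective _ (inc_inj J)] at h
  exact h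

theorem poly_act (p q : ℤ) (s : PS K n) (hs : s ∈ polyGrade K n p) (m : PS K n)
    (hm : m ∈ polyGrade K n q) : s • m ∈ polyGrade K n (p + q) := polyGrade_mul p q s m hs hm

theorem ideal_act (I : Ideal (PS K n)) (p q : ℤ) (s : PS K n) (hs : s ∈ polyGrade K n p) (m : I)
    (hm : m ∈ idealGrade K n I q) : s • m ∈ idealGrade K n I (p + q) :=
  polyGrade_mul p q s m hs hm

theorem quot_act (J : Ideal (PS K n)) (p q : ℤ) (s : PS K n) (hs : s ∈ polyGrade K n p)
    (m : PS K n ⧸ J) (hm : m ∈ quotGrade K n J q) : s • m ∈ quotGrade K n J (p + q) := by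
  obtain ⟨x, hx, rfl⟩ := hm
  exact ⟨s * x, polyGrade_mul p q s x hs hx, rfl⟩

theorem good_barD {N : Type} [AddCommGroup N] [Module K N] {GN : ℤ → Submodule K N} (h : Good GN)
    (i : ℕ) : Good (barDGrade K n N GN i) := by
  induction i with
  | zero => exact h
  | succ i ih => exact good_poly.tensor ih

theorem finrank_barD {N N' : Type} [AddCommGroup N] [Module K N] [AddCommGroup N'] [Module K N']
    {GN : ℤ → Submodule K N} {GN' : ℤ → Submodule K N'} (h : Good GN) (h' : Good GN')
    (he : ∀ p, Module.finrank K (GN p) = Module.finrank K (GN' p)) (i : ℕ) (p : ℤ) :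
    Module.finrank K (barDGrade K n N GN i p) = Module.finrank K (barDGrade K n N' GN' i p) := by
  induction i generalizing p with
  | zero => exact he p
  | succ i ih =>
    exact finrank_tensorGrade_eq good_poly (good_barD h i) good_poly (good_barD h' i)
      (fun _ => rfl) ih p

end GoodGr

open MvPolynomial TensorProduct CategoryTheory

noncomputable section PolyFamilies
set_option linter.unusedSectionVars false

variable {K : Type} [Field K] {σ : Type}
variable {V W U : Type} [AddCommGroup V] [Module K V] [AddCommGroup W] [Module K W]
  [AddCommGroup U] [Module K U]

/-- A family of vectors depending polynomially on parameters. -/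
def PolyFam (f : (σ → K) → V) : Prop :=
  f ∈ Submodule.span K {g : (σ → K) → V |
    ∃ (p : MvPolynomial σ K) (v : V), (fun t => eval t p • v) = g}

theorem PolyFam.basic (p : MvPolynomial σ K) (v : V) : PolyFam (fun t : σ → K => eval t p • v) :=
  Submodule.subset_span ⟨p, v, rfl⟩

theorem PolyFam.const (v : V) : PolyFam (fun _ : σ → K => v) := by
  have := PolyFam.basic (1 : MvPolynomial σ K) v
  simpa using this

theorem PolyFam.zero : PolyFam (fun _ : σ → K => (0 : V)) := Submodule.zero_mem _

theorem PolyFam.add {f g : (σ → K) → V} (hf : PolyFam f) (hg : PolyFam g) :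
    PolyFam (fun t => f t + g t) := Submodule.add_mem _ hf hg

theorem PolyFam.sub {f g : (σ → K) → V} (hf : PolyFam f) (hg : PolyFam g) :
    PolyFam (fun t => f t - g t) := Submodule.sub_mem _ hf hg

theorem PolyFam.smul {f : (σ → K) → V} (c : K) (hf : PolyFam f) :
    PolyFam (fun t => c • f t) := Submodule.smul_mem _ c hf

theorem PolyFam.sum {ι : Type} (s : Finset ι) {f : ι → (σ → K) → V}
    (hf : ∀ i ∈ s, PolyFam (f i)) : PolyFam (fun t => ∑ i ∈ s, f i t) := by
  have : (fun t => ∑ i ∈ s, f i t) = ∑ i ∈ s, f i := by ext t; simp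
  rw [this]
  exact Submodule.sum_mem _ hf

theorem PolyFam.induct {P : ((σ → K) → V) → Prop} {f : (σ → K) → V} (hf : PolyFam f)
    (h1 : ∀ (p : MvPolynomial σ K) (v : V), P (fun t => eval t p • v))
    (h0 : P (fun _ => 0))
    (h2 : ∀ f g, P f → P g → P (fun t => f t + g t))
    (h3 : ∀ (c : K) f, P f → P (fun t => c • f t)) : P f := by
  induction hf using Submodule.span_induction with
  | mem x hx => obtain ⟨p, v, rfl⟩ := hx; exact h1 p v
  | zero => exact h0
  | add x y _ _ hx hy => exact h2 x y hx hy
  | smul c x _ hx => exact h3 c x hx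

theorem PolyFam.map (L : V →ₗ[K] W) {f : (σ → K) → V} (hf : PolyFam f) :
    PolyFam (fun t => L (f t)) := by
  refine hf.induct (P := fun f => PolyFam (fun t => L (f t))) ?_ ?_ ?_ ?_
  · intro p v
    simp only [map_smul]
    exact PolyFam.basic p (L v)
  · simp only [map_zero]; exact PolyFam.zero
  · intro f g hf hg
    simp only [map_add]; exact hf.add hg
  · intro c f hf
    simp only [map_smul]; exact hf.smul c

theorem PolyFam.evalSmul (p : MvPolynomial σ K) {f : (σ → K) → V} (hf : PolyFam f) :
    PolyFam (fun t => eval t p • f t) := by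
  refine hf.induct (P := fun f => PolyFam (fun t => eval t p • f t)) ?_ ?_ ?_ ?_
  · intro q v
    have := PolyFam.basic (p * q) v
    simpa only [map_mul, mul_smul] using this
  · simp only [smul_zero]; exact PolyFam.zero
  · intro f g hf hg
    simp only [smul_add]; exact hf.add hg
  · intro c f hf
    simp only [smul_comm _ c]; exact hf.smul c

theorem PolyFam.bilin (B : V →ₗ[K] W →ₗ[K] U) {f : (σ → K) → V} {g : (σ → K) → W}
    (hf : PolyFam f) (hg : PolyFam g) : PolyFam (fun t => B (f t) (g t)) := by
  refine hf.induct (P := fun f => PolyFam (fun t => B (f t) (g t))) ?_ ?_ ?_ ?_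
  · intro p v
    simp only [map_smul, LinearMap.smul_apply]
    exact (hg.map (B v)).evalSmul p
  · simp only [map_zero, LinearMap.zero_apply]; exact PolyFam.zero
  · intro f g hf hg
    simp only [map_add, LinearMap.add_apply]; exact hf.add hg
  · intro c f hf
    simp only [map_smul, LinearMap.smul_apply]; exact hf.smul c

theorem PolyFam.tensorMap {V' W' : Type} [AddCommGroup V'] [Module K V'] [AddCommGroup W']
    [Module K W'] {f : (σ → K) → V →ₗ[K] V'} {g : (σ → K) → W →ₗ[K] W'}
    (hf : ∀ v, PolyFam (fun t => f t v)) (hg : ∀ w, PolyFam (fun t => g t w)) (x : V ⊗[K] W) :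
    PolyFam (fun t => TensorProduct.map (f t) (g t) x) := by
  induction x using TensorProduct.induction_on with
  | zero => simp only [map_zero]; exact PolyFam.zero
  | tmul v w =>
    simp only [TensorProduct.map_tmul]
    exact PolyFam.bilin (TensorProduct.mk K V' W') (hf v) (hg w)
  | add x y hx hy => simp only [map_add]; exact hx.add hy

theorem PolyFam.barMap {n : ℕ} {f : (σ → K) → V →ₗ[K] W} (hf : ∀ v, PolyFam (fun t => f t v))
    (i : ℕ) (x : barD K n V i) : PolyFam (fun t => barMap (n := n) LinearMap.id (f t) i x) := by
  induction i with
  | zero => exact hf x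
  | succ i ih =>
    exact PolyFam.tensorMap (f := fun _ => LinearMap.id)
      (g := fun t => _root_.barMap (n := n) LinearMap.id (f t) i) (fun v => PolyFam.const v) ih x

theorem PolyFam.scalar {f : (σ → K) → K} (hf : PolyFam f) :
    ∃ p : MvPolynomial σ K, ∀ t, f t = eval t p := by
  refine hf.induct (P := fun f => ∃ p : MvPolynomial σ K, ∀ t, f t = eval t p) ?_ ?_ ?_ ?_
  · intro p v
    exact ⟨p * C v, fun t => by simp⟩
  · exact ⟨0, fun t => by simp⟩
  · rintro f g ⟨p, hp⟩ ⟨q, hq⟩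
    exact ⟨p + q, fun t => by simp [hp, hq]⟩
  · rintro c f ⟨p, hp⟩
    exact ⟨C c * p, fun t => by simp [hp]⟩

/-- Polynomial families are closed under multiplication in an algebra. -/
theorem PolyFam.aeval_mv {n : ℕ} {v : Fin n → (σ → K) → PS K n} (hv : ∀ i, PolyFam (v i))
    (q : PS K n) : PolyFam (fun t => aeval (fun i => v i t) q) := by
  induction q using MvPolynomial.induction_on with
  | C a => simp only [MvPolynomial.algHom_C]; exact PolyFam.const _
  | add p q hp hq => simp only [map_add]; exact hp.add hq
  | mul_X p i hp =>
    simp only [map_mul, aeval_X]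
    exact PolyFam.bilin (LinearMap.mul K (PS K n)) hp (hv i)

theorem exists_dual {ι : Type} [Finite ι] [DecidableEq ι] {u : ι → V}
    (hu : LinearIndependent K u) :
    ∃ φ : ι → V →ₗ[K] K, ∀ k l, φ k (u l) = if k = l then 1 else 0 := by
  have key : ∀ k, ∃ φ : V →ₗ[K] K, ∀ l, φ (u l) = if k = l then 1 else 0 := by
    intro k
    obtain ⟨φ, hφ⟩ := LinearMap.exists_extend ((Module.Basis.span hu).coord k)
    refine ⟨φ, fun l => ?_⟩
    have := LinearMap.congr_fun hφ (Module.Basis.span hu l)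
    rw [LinearMap.comp_apply, Module.Basis.coord_apply, Module.Basis.repr_self,
      Finsupp.single_apply] at this
    have h2 : (Submodule.span K (Set.range u)).subtype (Module.Basis.span hu l) = u l := by
      rw [Module.Basis.span_apply]; rfl
    rw [h2] at this
    rw [this]
    simp only [eq_comm]
  choose φ hφ using key
  exact ⟨φ, hφ⟩

theorem PolyFam.indep {ι : Type} [Fintype ι] [DecidableEq ι] (u : ι → (σ → K) → V)
    (hu : ∀ k, PolyFam (u k)) (t₀ : σ → K) (h0 : LinearIndependent K (fun k => u k t₀)) :
    ∃ F : MvPolynomial σ K, eval t₀ F ≠ 0 ∧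
      ∀ t, eval t F ≠ 0 → LinearIndependent K (fun k => u k t) := by
  obtain ⟨φ, hφ⟩ := exists_dual h0
  choose p hp using fun k l => ((hu l).map (φ k)).scalar
  have hdet : ∀ t, eval t (Matrix.det (Matrix.of p)) =
      Matrix.det (Matrix.of fun k l => φ k (u l t)) := by
    intro t
    rw [RingHom.map_det]
    congr 1
    ext k l
    simp [hp]
  refine ⟨Matrix.det (Matrix.of p), ?_, ?_⟩
  · rw [hdet]
    have : (Matrix.of fun k l => φ k (u l t₀)) = (1 : Matrix ι ι K) := by
      ext k l
      rw [Matrix.of_apply, hφ, Matrix.one_apply]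
    rw [this, Matrix.det_one]
    exact one_ne_zero
  · intro t ht
    rw [hdet] at ht
    rw [Fintype.linearIndependent_iff]
    intro c hc
    have : (Matrix.of fun k l => φ k (u l t)).mulVec c = 0 := by
      ext k
      have := congrArg (φ k) hc
      rw [map_sum, map_zero] at this
      simp only [map_smul, smul_eq_mul] at this
      simp only [Matrix.mulVec, dotProduct, Matrix.of_apply, Pi.zero_apply]
      rw [← this]
      exact Finset.sum_congr rfl fun _ _ => mul_comm _ _
    have := Matrix.eq_zero_of_mulVec_eq_zero ht this
    exact fun i => congrFun this i

/-- Semicontinuity of the dimension of a span. -/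
theorem PolyFam.semicont {κ : Type} (u : κ → (σ → K) → V) (hu : ∀ k, PolyFam (u k)) (t₀ : σ → K)
    (W₀ : Submodule K V) [FiniteDimensional K W₀]
    (hW : Submodule.span K (Set.range fun k => u k t₀) = W₀) :
    ∃ F : MvPolynomial σ K, eval t₀ F ≠ 0 ∧
      ∀ t, eval t F ≠ 0 → ∀ W : Submodule K V, FiniteDimensional K W → (∀ k, u k t ∈ W) →
        Module.finrank K W₀ ≤ Module.finrank K W := by
  classical
  obtain ⟨ι, a, ha, hs, hli⟩ := exists_linearIndependent' K (fun k => u k t₀)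
  have hmem : ∀ i, u (a i) t₀ ∈ W₀ := by
    intro i
    rw [← hW]
    exact Submodule.subset_span ⟨a i, rfl⟩
  have hli' : LinearIndependent K (fun i => (⟨u (a i) t₀, hmem i⟩ : W₀)) := by
    apply LinearIndependent.of_comp W₀.subtype
    exact hli
  have hfin : Finite ι := hli'.finite
  have := Fintype.ofFinite ι
  obtain ⟨F, hF, hF'⟩ := PolyFam.indep (fun i => u (a i)) (fun i => hu _) t₀ hli
  refine ⟨F, hF, fun t ht W hWf hmW => ?_⟩
  have h1 : Module.finrank K W₀ = Fintype.card ι := by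
    rw [← hW, ← hs]
    exact finrank_span_eq_card hli
  rw [h1]
  have h2 : LinearIndependent K (fun i => (⟨u (a i) t, hmW _⟩ : W)) := by
    apply LinearIndependent.of_comp W.subtype
    exact hF' t ht
  exact h2.fintype_card_le_finrank

end PolyFamilies

open MvPolynomial TensorProduct CategoryTheory

noncomputable section LemmaA
set_option linter.unusedSectionVars false

variable {K : Type} [Field K] {n : ℕ}

theorem barMap_id (N : Type) [AddCommGroup N] [Module K N] (i : ℕ) :
    barMap (n := n) LinearMap.id (LinearMap.id : N →ₗ[K] N) i = LinearMap.id := by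
  induction i with
  | zero => rfl
  | succ i ih =>
    change TensorProduct.map LinearMap.id (barMap (n := n) LinearMap.id LinearMap.id i) = _
    rw [ih]
    exact TensorProduct.map_id

theorem barMap_comp {N N' N'' : Type} [AddCommGroup N] [Module K N] [AddCommGroup N']
    [Module K N'] [AddCommGroup N''] [Module K N''] (φ : N →ₗ[K] N') (ψ : N' →ₗ[K] N'') (i : ℕ) :
    barMap (n := n) LinearMap.id (ψ.comp φ) i =
      (barMap (n := n) LinearMap.id ψ i).comp (barMap (n := n) LinearMap.id φ i) := by
  induction i with
  | zero => rfl
  | succ i ih =>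
    change TensorProduct.map LinearMap.id (barMap (n := n) LinearMap.id (ψ.comp φ) i) = _
    rw [ih]
    exact TensorProduct.ext' (M := PS K n) (N := barD K n N i) fun a b => rfl

theorem barMap_zero {N N' : Type} [AddCommGroup N] [Module K N] [AddCommGroup N']
    [Module K N'] (i : ℕ) :
    barMap (n := n) LinearMap.id (0 : N →ₗ[K] N') i = 0 := by
  induction i with
  | zero => rfl
  | succ i ih =>
    change TensorProduct.map LinearMap.id (barMap (n := n) LinearMap.id (0 : N →ₗ[K] N') i) = _
    rw [ih]
    exact TensorProduct.map_zero_right _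

variable (K n) in
/-- Rank of the bar differential on a strand. -/
def rk (i : ℕ) (j : ℤ) (I J : Ideal (PS K n)) : ℕ :=
  Module.finrank K ((tensorGrade K (idealGrade K n I)
    (barDGrade K n (PS K n ⧸ J) (quotGrade K n J) (i + 1)) j).map (barB K n (PS K n ⧸ J) ↥I i))

variable (K n) in
/-- The ambient strand. -/
def amb (i : ℕ) (j : ℤ) : Submodule K (PS K n ⊗[K] barD K n (PS K n) i) :=
  tensorGrade K (polyGrade K n) (barDGrade K n (PS K n) (polyGrade K n) i) j

theorem amb_finite (i : ℕ) (j : ℤ) : FiniteDimensional K (amb K n i j) :=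
  (good_poly.tensor (good_barD good_poly i)).finite j

variable (K n) in
/-- The quotient map on the ambient complex. -/
def Qm (i : ℕ) (J : Ideal (PS K n)) :
    PS K n ⊗[K] barD K n (PS K n) i →ₗ[K] PS K n ⊗[K] barD K n (PS K n ⧸ J) i :=
  TensorProduct.map LinearMap.id (barMap LinearMap.id (qmk K n J) i)

variable (K n) in
/-- inclusion of the `I` complex -/
def jm (i : ℕ) (I : Ideal (PS K n)) (N : Type) [AddCommGroup N] [Module K N] :
    ↥I ⊗[K] barD K n N i →ₗ[K] PS K n ⊗[K] barD K n N i :=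
  TensorProduct.map (inc K n I) LinearMap.id

theorem jm_inj (i : ℕ) (I : Ideal (PS K n)) (N : Type) [AddCommGroup N] [Module K N] :
    Function.Injective (jm K n i I N) :=
  TensorProduct.map_injective_of_flat_flat _ _ (inc_inj I) Function.injective_id

variable (K n) in
/-- The image of the boundary in the ambient strand. -/
def Pm (i : ℕ) (j : ℤ) (I : Ideal (PS K n)) : Submodule K (PS K n ⊗[K] barD K n (PS K n) i) :=
  ((tensorGrade K (idealGrade K n I) (barDGrade K n (PS K n) (polyGrade K n) (i + 1)) j).map
    (jm K n (i + 1) I (PS K n))).map (barB K n (PS K n) (PS K n) i)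

theorem polyGrade_map_id (p : ℤ) :
    (polyGrade K n p).map (LinearMap.id : PS K n →ₗ[K] PS K n) = polyGrade K n p :=
  Submodule.map_id _

theorem Pm_le (i : ℕ) (j : ℤ) (I : Ideal (PS K n)) : Pm K n i j I ≤ amb K n i j := by
  refine le_trans (Submodule.map_mono ?_) (barB_graded poly_act poly_act i j)
  refine map_tensorGrade_le (inc K n I) LinearMap.id ?_ ?_ j
  · rintro p _ ⟨x, hx, rfl⟩; exact hx
  · intro p; rw [Submodule.map_id]

theorem amb_map (i : ℕ) (j : ℤ) (J : Ideal (PS K n)) :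
    (amb K n i j).map (Qm K n i J) =
      tensorGrade K (polyGrade K n) (barDGrade K n (PS K n ⧸ J) (quotGrade K n J) i) j :=
  map_tensorGrade_eq LinearMap.id _ polyGrade_map_id
    (barMap_grade_eq LinearMap.id (qmk K n J) polyGrade_map_id (fun _ => rfl) i) j

theorem Qm_comm (i : ℕ) (I J : Ideal (PS K n)) (x : ↥I ⊗[K] barD K n (PS K n) (i + 1)) :
    Qm K n i J (barB K n (PS K n) (PS K n) i (jm K n (i + 1) I (PS K n) x)) =
      jm K n i I (PS K n ⧸ J) (barB K n (PS K n ⧸ J) ↥I i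
        (TensorProduct.map LinearMap.id (barMap LinearMap.id (qmk K n J) (i + 1)) x)) := by
  have e1 := barMap_barB (M := PS K n) (M' := PS K n) (N := PS K n) (N' := PS K n ⧸ J)
    (AlgHom.id K (PS K n)) LinearMap.id (qmk K n J) (fun _ _ => rfl) (fun _ _ => rfl) i
    (jm K n (i + 1) I (PS K n) x)
  have e2 := barMap_barB (M := ↥I) (M' := PS K n) (N := PS K n ⧸ J) (N' := PS K n ⧸ J)
    (AlgHom.id K (PS K n)) (inc K n I) LinearMap.id (fun _ _ => rfl) (fun _ _ => rfl) i
    (TensorProduct.map LinearMap.id (barMap LinearMap.id (qmk K n J) (i + 1)) x)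
  have hid : (AlgHom.id K (PS K n)).toLinearMap = LinearMap.id := rfl
  rw [hid, barMap_id, barMap_id] at e2
  refine e1.trans (Eq.trans ?_ e2.symm)
  congr 1
  have e3 : (TensorProduct.map LinearMap.id (barMap LinearMap.id (qmk K n J) (i + 1))).comp
      (jm K n (i + 1) I (PS K n)) = (jm K n (i + 1) I (PS K n ⧸ J)).comp
      (TensorProduct.map LinearMap.id (barMap LinearMap.id (qmk K n J) (i + 1))) :=
    TensorProduct.ext' fun _ _ => rfl
  exact LinearMap.congr_fun e3 x

theorem Pm_map (i : ℕ) (j : ℤ) (I J : Ideal (PS K n)) :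
    (Pm K n i j I).map (Qm K n i J) = ((tensorGrade K (idealGrade K n I)
    (barDGrade K n (PS K n ⧸ J) (quotGrade K n J) (i + 1)) j).map
      (barB K n (PS K n ⧸ J) ↥I i)).map (jm K n i I (PS K n ⧸ J)) := by
  have e := map_tensorGrade_eq (GA := idealGrade K n I) (GA' := idealGrade K n I)
    (GB := barDGrade K n (PS K n) (polyGrade K n) (i + 1))
    (GB' := barDGrade K n (PS K n ⧸ J) (quotGrade K n J) (i + 1))
    LinearMap.id (barMap LinearMap.id (qmk K n J) (i + 1)) (fun p => Submodule.map_id _)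
    (barMap_grade_eq LinearMap.id (qmk K n J) polyGrade_map_id (fun _ => rfl) (i + 1)) j
  rw [← e]
  unfold Pm
  rw [← Submodule.map_comp, ← Submodule.map_comp, ← Submodule.map_comp, ← Submodule.map_comp]
  congr 1
  exact LinearMap.ext fun x => Qm_comm i I J x

theorem rk_eq (i : ℕ) (j : ℤ) (I J : Ideal (PS K n)) :
    rk K n i j I J = Module.finrank K ((Pm K n i j I).map (Qm K n i J)) := by
  rw [Pm_map]
  exact (Submodule.equivMapOfInjective (jm K n i I (PS K n ⧸ J))
    (jm_inj i I (PS K n ⧸ J)) _).finrank_eq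

variable (K n) in
/-- The relation space. -/
def Wm (i : ℕ) (j : ℤ) (I J : Ideal (PS K n)) : Submodule K (PS K n ⊗[K] barD K n (PS K n) i) :=
  Pm K n i j I ⊔ (LinearMap.ker (Qm K n i J) ⊓ amb K n i j)

theorem Wm_le (i : ℕ) (j : ℤ) (I J : Ideal (PS K n)) : Wm K n i j I J ≤ amb K n i j :=
  sup_le (Pm_le i j I) inf_le_right

theorem Wm_finite (i : ℕ) (j : ℤ) (I J : Ideal (PS K n)) :
    FiniteDimensional K (Wm K n i j I J) :=
  have := amb_finite (K := K) (n := n) i j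
  Submodule.finiteDimensional_of_le (Wm_le i j I J)

theorem Wm_formula (i : ℕ) (j : ℤ) (I J : Ideal (PS K n)) :
    Module.finrank K (Wm K n i j I J) + Module.finrank K (tensorGrade K (polyGrade K n)
      (barDGrade K n (PS K n ⧸ J) (quotGrade K n J) i) j) =
      rk K n i j I J + Module.finrank K (amb K n i j) := by
  have := amb_finite (K := K) (n := n) i j
  rw [rk_eq, ← amb_map]
  exact finrank_sup_ker _ _ _ (Pm_le i j I)

theorem ker_Qm (i : ℕ) (j : ℤ) {J : Ideal (PS K n)} (hJ : IsHomog K n J) :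
    LinearMap.ker (Qm K n i J) ⊓ amb K n i j =
      (tensorGrade K (polyGrade K n) (barDGrade K n ↥J (idealGrade K n J) i) j).map
        (TensorProduct.map LinearMap.id (barMap LinearMap.id (inc K n J) i)) := by
  have hg : ∀ p, (tensorGrade K (polyGrade K n) (barDGrade K n ↥J (idealGrade K n J) i) p).map
        (TensorProduct.map LinearMap.id (barMap LinearMap.id (inc K n J) i)) ≤ amb K n i p := by
    refine map_tensorGrade_le LinearMap.id _ (fun p => (polyGrade_map_id p).le) ?_
    refine barMap_grade_le LinearMap.id (inc K n J) (fun p => (polyGrade_map_id p).le) ?_ i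
    rintro p _ ⟨x, hx, rfl⟩
    exact hx
  have hex : Function.Exact (TensorProduct.map (LinearMap.id : PS K n →ₗ[K] PS K n)
      (barMap (n := n) LinearMap.id (inc K n J) i)) (Qm K n i J) :=
    lTensor_exact (PS K n) (barMap_exact (inc K n J) (qmk K n J) (qmk_surj J) (inc_qmk_exact J) i)
      (barMap_surjective LinearMap.id _ Function.surjective_id (qmk_surj J) i)
  apply le_antisymm
  · rintro x ⟨hx, hx'⟩
    obtain ⟨y, rfl⟩ := (hex x).1 hx
    obtain ⟨y', h1, h2⟩ := Good.lift (good_poly.tensor (good_barD (good_ideal hJ) i))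
      (good_poly.tensor (good_barD good_poly i)) _ hg hx'
    exact ⟨y', h1, h2⟩
  · rintro _ ⟨y, hy, rfl⟩
    exact ⟨(hex _).2 ⟨y, rfl⟩, hg j ⟨y, hy, rfl⟩⟩

/-- Semicontinuity of the rank of the bar differential. -/
theorem lemmaA {σ : Type} (i : ℕ) (j : ℤ) {I₀ J₀ : Ideal (PS K n)}
    (hJ₀ : IsHomog K n J₀)
    (α : (σ → K) → ↥I₀ →ₗ[K] PS K n) (β : (σ → K) → ↥J₀ →ₗ[K] PS K n)
    (hα : ∀ x, PolyFam (fun t => α t x)) (hβ : ∀ x, PolyFam (fun t => β t x))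
    (gα : ∀ t p, (idealGrade K n I₀ p).map (α t) ≤ polyGrade K n p)
    (gβ : ∀ t p, (idealGrade K n J₀ p).map (β t) ≤ polyGrade K n p)
    (t₀ : σ → K) (hα₀ : α t₀ = inc K n I₀) (hβ₀ : β t₀ = inc K n J₀) :
    ∃ F : MvPolynomial σ K, eval t₀ F ≠ 0 ∧ ∀ t, eval t F ≠ 0 → ∀ I J : Ideal (PS K n),
      IsHomog K n J →
      (∀ p, Module.finrank K (quotGrade K n J₀ p) = Module.finrank K (quotGrade K n J p)) →
      (∀ x, α t x ∈ I) → (∀ x, β t x ∈ J) → rk K n i j I₀ J₀ ≤ rk K n i j I J := by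
  let C1 := tensorGrade K (idealGrade K n I₀) (barDGrade K n (PS K n) (polyGrade K n) (i + 1)) j
  let C2 := tensorGrade K (polyGrade K n) (barDGrade K n ↥J₀ (idealGrade K n J₀) i) j
  let L1 : (σ → K) → ↥I₀ ⊗[K] barD K n (PS K n) (i + 1) →ₗ[K] PS K n ⊗[K] barD K n (PS K n) i :=
    fun t => (barB K n (PS K n) (PS K n) i).comp (TensorProduct.map (α t) LinearMap.id)
  let L2 : (σ → K) → PS K n ⊗[K] barD K n ↥J₀ i →ₗ[K] PS K n ⊗[K] barD K n (PS K n) i :=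
    fun t => TensorProduct.map LinearMap.id (barMap LinearMap.id (β t) i)
  let u : C1 ⊕ C2 → (σ → K) → PS K n ⊗[K] barD K n (PS K n) i := fun k t =>
    Sum.elim (fun z : C1 => L1 t z) (fun y : C2 => L2 t y) k
  have hu : ∀ k, PolyFam (u k) := by
    rintro (z | y)
    · exact (PolyFam.tensorMap hα (g := fun _ => LinearMap.id) (fun w => PolyFam.const w) z.1).map
        (barB K n (PS K n) (PS K n) i)
    · exact PolyFam.tensorMap (f := fun _ => LinearMap.id) (fun w => PolyFam.const w)
        (PolyFam.barMap hβ i) y.1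
  have hspan : Submodule.span K (Set.range fun k => u k t₀) = Wm K n i j I₀ J₀ := by
    have h1 : Set.range (fun k => u k t₀) = (Pm K n i j I₀ : Set _) ∪
        (LinearMap.ker (Qm K n i J₀) ⊓ amb K n i j : Submodule K _) := by
      have e1 : L1 t₀ = (barB K n (PS K n) (PS K n) i).comp (jm K n (i + 1) I₀ (PS K n)) := by
        change (barB K n (PS K n) (PS K n) i).comp (TensorProduct.map (α t₀) LinearMap.id) = _
        rw [hα₀]; rfl
      have e2 : L2 t₀ = TensorProduct.map LinearMap.id (barMap LinearMap.id (inc K n J₀) i) := by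
        change TensorProduct.map LinearMap.id (barMap LinearMap.id (β t₀) i) = _
        rw [hβ₀]
      have e3 : Pm K n i j I₀ = C1.map (L1 t₀) := by
        rw [e1, Submodule.map_comp]; rfl
      have e4 : LinearMap.ker (Qm K n i J₀) ⊓ amb K n i j = C2.map (L2 t₀) := by
        rw [e2]; exact ker_Qm i j hJ₀
      rw [e3, e4]
      ext x
      constructor
      · rintro ⟨z | y, rfl⟩
        · exact Or.inl ⟨z, z.2, rfl⟩
        · exact Or.inr ⟨y, y.2, rfl⟩
      · rintro (⟨z, hz, rfl⟩ | ⟨y, hy, rfl⟩)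
        · exact ⟨Sum.inl ⟨z, hz⟩, rfl⟩
        · exact ⟨Sum.inr ⟨y, hy⟩, rfl⟩
    rw [h1, Submodule.span_union, Submodule.span_eq, Submodule.span_eq]
    rfl
  have := Wm_finite (K := K) (n := n) i j I₀ J₀
  obtain ⟨F, hF, hF'⟩ := PolyFam.semicont u hu t₀ (Wm K n i j I₀ J₀) hspan
  refine ⟨F, hF, fun t ht I J hJ hd hαI hβJ => ?_⟩
  have hfin := hF' t ht (Wm K n i j I J) (Wm_finite i j I J) (by
    rintro (z | y)
    · refine (le_sup_left : Pm K n i j I ≤ _) ?_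
      refine ⟨TensorProduct.map (α t) LinearMap.id z.1, ?_, rfl⟩
      have hle : C1 ≤ (((tensorGrade K (idealGrade K n I)
          (barDGrade K n (PS K n) (polyGrade K n) (i + 1)) j).map
          (jm K n (i + 1) I (PS K n)))).comap (TensorProduct.map (α t) LinearMap.id) := by
        refine tensorGrade_le ?_
        intro p q hpq a ha b hb
        refine ⟨(⟨α t a, hαI a⟩ : I) ⊗ₜ[K] b, ?_, rfl⟩
        exact tmul_mem_tensorGrade hpq (gα t p ⟨a, ha, rfl⟩) hb
      exact hle z.2
    · refine (le_sup_right : LinearMap.ker (Qm K n i J) ⊓ amb K n i j ≤ _) ⟨?_, ?_⟩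
      · change Qm K n i J (TensorProduct.map LinearMap.id (barMap LinearMap.id (β t) i) y.1) = 0
        have hz : (qmk K n J).comp (β t) = 0 := by
          ext x
          exact qmk_eq_zero.2 (hβJ x)
        have e : (Qm K n i J).comp
            (TensorProduct.map LinearMap.id (barMap LinearMap.id (β t) i)) = 0 := by
          unfold Qm
          rw [← TensorProduct.map_comp, ← barMap_comp, hz, barMap_zero,
            TensorProduct.map_zero_right]
        exact LinearMap.congr_fun e y.1
      · refine map_tensorGrade_le LinearMap.id (barMap LinearMap.id (β t) i)
          (fun p => (polyGrade_map_id p).le) ?_ j ⟨y.1, y.2, rfl⟩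
        exact barMap_grade_le LinearMap.id (β t) (fun p => (polyGrade_map_id p).le) (gβ t) i)
  have f1 := Wm_formula (K := K) (n := n) i j I₀ J₀
  have f2 := Wm_formula (K := K) (n := n) i j I J
  have f3 := finrank_tensorGrade_eq (K := K) (good_poly (K := K) (n := n))
    (good_barD (n := n) (good_quot hJ₀) i)
    (good_poly (K := K) (n := n)) (good_barD (n := n) (good_quot hJ) i) (fun _ => rfl)
    (finrank_barD (good_quot hJ₀) (good_quot hJ) hd i) j
  omega

end LemmaA

open MvPolynomial TensorProduct CategoryTheory

noncomputable section Coord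
set_option linter.unusedSectionVars false

variable {K : Type} [Field K] {n : ℕ}

theorem coordChange_X (g : GL (Fin n) K) (i : Fin n) :
    coordChange K n g (X i) = ∑ j, ((g : Matrix (Fin n) (Fin n) K) j i) • X j := by
  simp [coordChange]

theorem coordChange_mul (g g' : GL (Fin n) K) (x : PS K n) :
    coordChange K n g (coordChange K n g' x) = coordChange K n (g * g') x := by
  have : (coordChange K n g).comp (coordChange K n g') = coordChange K n (g * g') := by
    apply MvPolynomial.algHom_ext
    intro i
    rw [AlgHom.comp_apply, coordChange_X, coordChange_X, map_sum]
    simp only [map_smul, coordChange_X, Finset.smul_sum, smul_smul]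
    rw [Finset.sum_comm]
    refine Finset.sum_congr rfl fun k _ => ?_
    rw [← Finset.sum_smul]
    congr 1
    rw [Units.val_mul, Matrix.mul_apply]
    exact Finset.sum_congr rfl fun _ _ => mul_comm _ _
  exact AlgHom.congr_fun this x

theorem coordChange_one (x : PS K n) : coordChange K n 1 x = x := by
  have : coordChange K n 1 = AlgHom.id K (PS K n) := by
    apply MvPolynomial.algHom_ext
    intro i
    rw [coordChange_X]
    simp [Matrix.one_apply]
  rw [this]; rfl

variable (K n) in
/-- `coordChange` as an equivalence. -/
def coordEquiv (g : GL (Fin n) K) : PS K n ≃ₐ[K] PS K n :=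
  AlgEquiv.ofAlgHom (coordChange K n g) (coordChange K n g⁻¹)
    (AlgHom.ext fun x => by
      rw [AlgHom.comp_apply, coordChange_mul, mul_inv_cancel, coordChange_one]; rfl)
    (AlgHom.ext fun x => by
      rw [AlgHom.comp_apply, coordChange_mul, inv_mul_cancel, coordChange_one]; rfl)

theorem aeval_linear_grade (v : Fin n → PS K n) (hv : ∀ i, (v i).IsHomogeneous 1) (p : ℤ)
    (x : PS K n) (hx : x ∈ polyGrade K n p) : aeval v x ∈ polyGrade K n p := by
  by_cases hp : 0 ≤ p
  · rw [polyGrade_nonneg hp] at *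
    have := MvPolynomial.IsHomogeneous.aeval (φ := x) hx v hv
    rw [one_mul] at this
    exact this
  · rw [polyGrade_neg (by omega)] at *
    rw [(Submodule.mem_bot K).1 hx, map_zero]; exact zero_mem _

theorem coordChange_grade (g : GL (Fin n) K) (p : ℤ)
    (x : PS K n) (hx : x ∈ polyGrade K n p) : coordChange K n g x ∈ polyGrade K n p := by
  refine aeval_linear_grade _ (fun i => ?_) p x hx
  refine MvPolynomial.IsHomogeneous.sum _ _ _ fun j _ => ?_
  exact (homogeneousSubmodule (Fin n) K 1).smul_mem _ (isHomogeneous_X K j)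

/-- A graded automorphism. -/
def GrAut (e : PS K n ≃ₐ[K] PS K n) : Prop :=
  (∀ p, ∀ x ∈ polyGrade K n p, e x ∈ polyGrade K n p) ∧
    ∀ p, ∀ x ∈ polyGrade K n p, e.symm x ∈ polyGrade K n p

theorem coordEquiv_gr (g : GL (Fin n) K) : GrAut (coordEquiv K n g) :=
  ⟨fun p x hx => coordChange_grade g p x hx, fun p x hx => coordChange_grade g⁻¹ p x hx⟩

theorem GrAut.symm {e : PS K n ≃ₐ[K] PS K n} (h : GrAut e) : GrAut e.symm := ⟨h.2, h.1⟩

theorem GrAut.map_eq {e : PS K n ≃ₐ[K] PS K n} (h : GrAut e) (p : ℤ) :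
    (polyGrade K n p).map e.toAlgHom.toLinearMap = polyGrade K n p := by
  apply le_antisymm
  · rintro _ ⟨x, hx, rfl⟩
    exact h.1 p x hx
  · intro x hx
    exact ⟨e.symm x, h.2 p x hx, e.apply_symm_apply x⟩

theorem polyProj_comm (f : PS K n →ₗ[K] PS K n)
    (hf : ∀ p, ∀ x ∈ polyGrade K n p, f x ∈ polyGrade K n p) (p : ℤ) (x : PS K n) :
    polyProj K n p (f x) = f (polyProj K n p x) := by
  have hx : x ∈ iSup (polyGrade K n) := by rw [polyGrade_iSup]; trivial
  induction hx using Submodule.iSup_induction' with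
  | mem q x hx =>
    have hfx := hf q x hx
    by_cases hq : q = p
    · subst hq; rw [polyProj_self _ _ hfx, polyProj_self _ _ hx]
    · rw [polyProj_ne p q hq _ hfx, polyProj_ne p q hq _ hx, map_zero]
  | zero => simp
  | add x y _ _ hx hy => simp only [map_add, hx, hy]

theorem isHomog_of_polyProj {I : Ideal (PS K n)}
    (h : ∀ p : ℤ, ∀ x ∈ I, polyProj K n p x ∈ I) : IsHomog K n I := by
  intro f hf d
  have := h d f hf
  unfold polyProj at this
  rw [if_pos (Int.natCast_nonneg d), Int.toNat_natCast] at this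
  exact this

theorem mem_map_equiv (e : PS K n ≃ₐ[K] PS K n) (J : Ideal (PS K n)) (x : PS K n) :
    x ∈ Ideal.map e J ↔ e.symm x ∈ J := by
  rw [Ideal.mem_map_of_equiv]
  constructor
  · rintro ⟨y, hy, rfl⟩; simpa using hy
  · intro h; exact ⟨_, h, e.apply_symm_apply x⟩

theorem IsHomog.map {e : PS K n ≃ₐ[K] PS K n} (h : GrAut e) {J : Ideal (PS K n)}
    (hJ : IsHomog K n J) : IsHomog K n (Ideal.map e J) := by
  apply isHomog_of_polyProj
  intro p x hx
  rw [mem_map_equiv] at *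
  have := polyProj_comm e.symm.toAlgHom.toLinearMap h.2 p x
  have h2 := hJ.polyProj p _ hx
  exact this ▸ h2

theorem finrank_ideal_map {e : PS K n ≃ₐ[K] PS K n} (h : GrAut e) (J : Ideal (PS K n)) (p : ℤ) :
    Module.finrank K (idealGrade K n (Ideal.map e J) p) =
      Module.finrank K (idealGrade K n J p) := by
  have key : (idealGrade K n (Ideal.map e J) p).map (inc K n _) =
      ((idealGrade K n J p).map (inc K n J)).map e.toAlgHom.toLinearMap := by
    ext x
    constructor
    · rintro ⟨y, hy, rfl⟩
      exact ⟨e.symm y, ⟨⟨e.symm y, (mem_map_equiv e J y).1 y.2⟩, h.2 p y hy, rfl⟩,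
        e.apply_symm_apply _⟩
    · rintro ⟨_, ⟨y, hy, rfl⟩, rfl⟩
      exact ⟨⟨e y, (mem_map_equiv e J _).2 (by simp)⟩, h.1 p y hy, rfl⟩
  rw [← finrank_map_of_injective _ (inc_inj (Ideal.map e J)), key,
    finrank_map_of_injective _ e.injective, finrank_map_of_injective _ (inc_inj J)]

theorem finrank_quot_eq {J J' : Ideal (PS K n)}
    (h : ∀ p, Module.finrank K (idealGrade K n J p) = Module.finrank K (idealGrade K n J' p))
    (p : ℤ) : Module.finrank K (quotGrade K n J p) = Module.finrank K (quotGrade K n J' p) := by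
  have h1 := finrank_quot_add J p
  have h2 := finrank_quot_add J' p
  have := h p
  omega

theorem rk_map_le {e : PS K n ≃ₐ[K] PS K n} (h : GrAut e) (i : ℕ) (j : ℤ) {I J : Ideal (PS K n)}
    (hI : IsHomog K n I) (hJ : IsHomog K n J) :
    rk K n i j I J ≤ rk K n i j (Ideal.map e I) (Ideal.map e J) := by
  let f : ↥I →ₗ[K] ↥(Ideal.map e I) :=
    LinearMap.codRestrict ((Ideal.map e I).restrictScalars K)
      (e.toAlgHom.toLinearMap.comp (inc K n I)) (fun x => Ideal.mem_map_of_mem e x.2)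
  have hf : ∀ x : I, ((f x : ↥(Ideal.map e I)) : PS K n) = e x := fun _ => rfl
  let φe := Ideal.quotientEquivAlg J (Ideal.map e J) e rfl
  let φ : (PS K n ⧸ J) →ₗ[K] (PS K n ⧸ Ideal.map e J) := φe.toAlgHom.toLinearMap
  have hφ : ∀ x, φ (qmk K n J x) = qmk K n (Ideal.map e J) (e x) := fun _ => rfl
  have hinj : Function.Injective
      (TensorProduct.map f (barMap (n := n) e.toAlgHom.toLinearMap φ i)) := by
    refine TensorProduct.map_injective_of_flat_flat _ _ ?_ ?_
    · intro x y hxy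
      apply Subtype.ext
      apply e.injective
      exact congrArg (inc K n (Ideal.map e I)) hxy
    · exact barMap_injective _ _ e.injective φe.injective i
  have hC := (((good_ideal (hI.map h)).tensor (good_barD (n := n) (good_quot (hJ.map h)) (i + 1))).finite
    j)
  unfold rk
  have e1 := (Submodule.equivMapOfInjective
    (TensorProduct.map f (barMap (n := n) e.toAlgHom.toLinearMap φ i)) hinj
    ((tensorGrade K (idealGrade K n I)
    (barDGrade K n (PS K n ⧸ J) (quotGrade K n J) (i + 1)) j).map
      (barB K n (PS K n ⧸ J) ↥I i))).finrank_eq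
  rw [e1]
  refine Submodule.finrank_mono ?_
  rintro _ ⟨_, ⟨x, hx, rfl⟩, rfl⟩
  have hb := barMap_barB (M := ↥I) (M' := ↥(Ideal.map e I)) (N := PS K n ⧸ J)
    (N' := PS K n ⧸ Ideal.map e J) e.toAlgHom f φ
    (fun s m => Subtype.ext (by
      change e (s * m) = e s * e m
      exact map_mul e s m))
    (fun s x => by
      obtain ⟨x, rfl⟩ := qmk_surj J x
      rw [← qmk_smul, hφ, hφ, map_mul]
      rfl) i x
  rw [hb]
  refine ⟨_, ?_, rfl⟩
  refine map_tensorGrade_le f (barMap e.toAlgHom.toLinearMap φ (i + 1)) ?_ ?_ j ⟨x, hx, rfl⟩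
  · rintro p _ ⟨y, hy, rfl⟩
    exact h.1 p y hy
  · refine barMap_grade_le e.toAlgHom.toLinearMap φ (fun p => (h.map_eq p).le) ?_ (i + 1)
    rintro p _ ⟨_, ⟨y, hy, rfl⟩, rfl⟩
    exact ⟨e y, h.1 p y hy, rfl⟩

end Coord

open MvPolynomial TensorProduct CategoryTheory

noncomputable section Grob
set_option linter.unusedSectionVars false

variable {K : Type} [Field K] {n : ℕ}

/-- Weight components. -/
def wc (w : Fin n → ℕ) (e : ℕ) : PS K n →ₗ[K] PS K n := weightedHomogeneousComponent w e

theorem wdeg_eq (w : Fin n → ℕ) (m : Fin n →₀ ℕ) : wdeg n w m = Finsupp.weight w m := by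
  rw [Finsupp.weight_apply, Finsupp.sum_fintype _ _ (by simp)]
  exact Finset.sum_congr rfl fun i _ => by simp [mul_comm]

theorem wdeg_add (w : Fin n → ℕ) (m m' : Fin n →₀ ℕ) :
    wdeg n w (m + m') = wdeg n w m + wdeg n w m' := by
  simp only [wdeg_eq, map_add]

theorem coeff_wc (w : Fin n → ℕ) (e : ℕ) (m : Fin n →₀ ℕ) (f : PS K n) :
    coeff m (wc w e f) = if wdeg n w m = e then coeff m f else 0 := by
  rw [wdeg_eq]
  exact coeff_weightedHomogeneousComponent _ _ _

variable (K) in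
/-- Polynomials of all weights `< e`. -/
def Lt (w : Fin n → ℕ) (e : ℕ) : Submodule K (PS K n) where
  carrier := {f | ∀ m, e ≤ wdeg n w m → coeff m f = 0}
  zero_mem' := fun m _ => by simp
  add_mem' := fun {f g} hf hg m hm => by rw [coeff_add, hf m hm, hg m hm, add_zero]
  smul_mem' := fun c f hf m hm => by rw [coeff_smul, hf m hm, smul_zero]

theorem mem_Lt {w : Fin n → ℕ} {e : ℕ} {f : PS K n} :
    f ∈ Lt K w e ↔ ∀ m, e ≤ wdeg n w m → coeff m f = 0 := Iff.rfl

theorem ker_wc_Lt {w : Fin n → ℕ} {e : ℕ} {f : PS K n} :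
    f ∈ Lt K w e ↔ f ∈ Lt K w (e + 1) ∧ wc w e f = 0 := by
  constructor
  · intro h
    refine ⟨fun m hm => h m (by omega), ?_⟩
    ext m
    rw [coeff_wc, coeff_zero]
    split_ifs with h'
    · exact h m h'.ge
    · rfl
  · rintro ⟨h, h'⟩ m hm
    rcases hm.eq_or_lt with h1 | h1
    · have := coeff_wc w e m f
      rw [h', if_pos h1.symm, coeff_zero] at this
      exact this.symm
    · exact h m h1

theorem wc_Lt (w : Fin n → ℕ) (e : ℕ) (f : PS K n) : wc w e f ∈ Lt K w (e + 1) := by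
  intro m hm
  rw [coeff_wc, if_neg (by omega)]

theorem wc_wc (w : Fin n → ℕ) (e : ℕ) (f : PS K n) : wc w e (wc w e f) = wc w e f := by
  ext m
  simp only [coeff_wc]
  split_ifs <;> rfl

theorem mem_polyGrade_iff (p : ℤ) (f : PS K n) :
    f ∈ polyGrade K n p ↔ ∀ m, coeff m f ≠ 0 → (m.degree : ℤ) = p := by
  by_cases hp : 0 ≤ p
  · rw [polyGrade_nonneg hp, mem_homogeneousSubmodule]
    constructor
    · intro h m hm
      have := h hm
      have h3 : m.degree = Finsupp.weight (1 : Fin n → ℕ) m :=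
        DFunLike.congr_fun Finsupp.degree_eq_weight_one m
      omega
    · intro h m hm
      have := h m hm
      have h3 : m.degree = Finsupp.weight (1 : Fin n → ℕ) m :=
        DFunLike.congr_fun Finsupp.degree_eq_weight_one m
      change (Finsupp.weight 1) m = p.toNat
      omega
  · rw [polyGrade_neg (by omega), Submodule.mem_bot]
    constructor
    · rintro rfl m hm
      simp at hm
    · intro h
      ext m
      by_contra hm
      have := h m hm
      omega

theorem wc_grade (w : Fin n → ℕ) (e : ℕ) (p : ℤ) (f : PS K n) (hf : f ∈ polyGrade K n p) :
    wc w e f ∈ polyGrade K n p := by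
  rw [mem_polyGrade_iff] at *
  intro m hm
  rw [coeff_wc] at hm
  split_ifs at hm with h
  · exact hf m hm
  · exact absurd rfl hm

theorem Lt_grade_bound (w : Fin n → ℕ) (p : ℤ) :
    ∃ e, polyGrade K n p ≤ Lt K w e := by
  refine ⟨(∑ i, w i * p.toNat) + 1, fun f hf m hm => ?_⟩
  rw [mem_polyGrade_iff] at hf
  by_contra h
  have h1 := hf m h
  have h2 : wdeg n w m ≤ ∑ i, w i * p.toNat := by
    refine Finset.sum_le_sum fun i _ => Nat.mul_le_mul_left _ ?_
    have := Finsupp.le_degree i m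
    omega
  omega

theorem initialForm_eq (w : Fin n → ℕ) (f : PS K n) :
    initialForm K n w f = wc w (f.support.sup (wdeg n w)) f := by
  ext m
  rw [coeff_wc]
  unfold initialForm
  simp only [coeff_sum, coeff_monomial]
  rw [Finset.sum_ite_eq' (f.support.filter _) m]
  by_cases h1 : coeff m f = 0
  · simp [h1]
  · simp [h1]

theorem wc_mem_init (w : Fin n → ℕ) (I : Ideal (PS K n)) (e : ℕ) (f : PS K n) (hf : f ∈ I)
    (hL : f ∈ Lt K w (e + 1)) : wc w e f ∈ initialIdealW K n w I := by
  by_cases h : ∃ m, coeff m f ≠ 0 ∧ wdeg n w m = e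
  · obtain ⟨m, hm, hme⟩ := h
    have : f.support.sup (wdeg n w) = e := by
      apply le_antisymm
      · refine Finset.sup_le fun m' hm' => ?_
        by_contra hlt
        exact (mem_support_iff.1 hm') (hL m' (by omega))
      · rw [← hme]
        exact Finset.le_sup (f := wdeg n w) (mem_support_iff.2 hm)
    rw [← this, ← initialForm_eq]
    exact Ideal.subset_span ⟨f, hf, rfl⟩
  · have : wc w e f = 0 := by
      ext m
      rw [coeff_wc, coeff_zero]
      split_ifs with h'
      · by_contra h2
        exact h ⟨m, h2, h'⟩
      · rfl
    rw [this]; exact zero_mem _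

theorem polyProj_wc (w : Fin n → ℕ) (e : ℕ) (p : ℤ) (f : PS K n) :
    polyProj K n p (wc w e f) = wc w e (polyProj K n p f) :=
  polyProj_comm (wc w e) (fun p x hx => wc_grade w e p x hx) p f

theorem coeff_polyProj (p : ℤ) (m : Fin n →₀ ℕ) (f : PS K n) :
    coeff m (polyProj K n p f) = if (m.degree : ℤ) = p then coeff m f else 0 := by
  unfold polyProj
  split_ifs with h h1 h1
  · rw [coeff_homogeneousComponent, if_pos (by omega)]
  · rw [coeff_homogeneousComponent, if_neg (by omega)]
  · omega
  · simp

theorem polyProj_Lt (w : Fin n → ℕ) (e : ℕ) (p : ℤ) (f : PS K n) (hf : f ∈ Lt K w e) :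
    polyProj K n p f ∈ Lt K w e := by
  intro m hm
  rw [coeff_polyProj, hf m hm, ite_self]

/-- Piece of initial ideal -/
def Yp (w : Fin n → ℕ) (I : Ideal (PS K n)) (p : ℤ) (e : ℕ) : Submodule K (PS K n) :=
  (I.restrictScalars K ⊓ polyGrade K n p ⊓ Lt K w (e + 1)).map (wc w e)

theorem mul_monomial_wc (w : Fin n → ℕ) (e : ℕ) (m : Fin n →₀ ℕ) (c : K) (f : PS K n) :
    monomial m c * wc w e f = wc w (wdeg n w m + e) (monomial m c * f) := by
  ext k
  rw [coeff_wc, coeff_monomial_mul', coeff_monomial_mul', coeff_wc]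
  by_cases hk : m ≤ k
  · rw [if_pos hk, if_pos hk]
    obtain ⟨k', rfl⟩ := le_iff_exists_add.1 hk
    rw [wdeg_add, add_tsub_cancel_left]
    by_cases h : wdeg n w k' = e
    · simp [h]
    · rw [if_neg h, if_neg (by omega), mul_zero]
  · rw [if_neg hk, if_neg hk, ite_self]

theorem monomial_mul_Lt (w : Fin n → ℕ) (e : ℕ) (m : Fin n →₀ ℕ) (c : K) (f : PS K n)
    (hf : f ∈ Lt K w e) : monomial m c * f ∈ Lt K w (wdeg n w m + e) := by
  intro k hk'
  rw [coeff_monomial_mul']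
  by_cases hk : m ≤ k
  · obtain ⟨k', rfl⟩ := le_iff_exists_add.1 hk
    rw [wdeg_add] at hk'
    rw [if_pos hk, add_tsub_cancel_left, hf k' (by omega), mul_zero]
  · rw [if_neg hk]

theorem init_le (w : Fin n → ℕ) {I : Ideal (PS K n)} (hI : IsHomog K n I) (x : PS K n)
    (hx : x ∈ initialIdealW K n w I) : x ∈ ⨆ pe : ℤ × ℕ, Yp w I pe.1 pe.2 := by
  set Q := ⨆ pe : ℤ × ℕ, Yp w I pe.1 pe.2 with hQ
  have hmon : ∀ (m : Fin n →₀ ℕ) (c : K), ∀ x ∈ Q, monomial m c * x ∈ Q := by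
    intro m c x hx
    have : Q ≤ Q.comap (LinearMap.mulLeft K (monomial m c)) := by
      conv_lhs => rw [hQ]
      refine iSup_le ?_
      rintro ⟨p, e⟩ _ ⟨f, ⟨⟨h1, h2⟩, h3⟩, rfl⟩
      rw [Submodule.mem_comap, LinearMap.mulLeft_apply, mul_monomial_wc]
      refine Submodule.mem_iSup_of_mem ((m.degree : ℤ) + p, wdeg n w m + e) ?_
      refine ⟨_, ⟨⟨I.mul_mem_left _ h1, ?_⟩, ?_⟩, rfl⟩
      · refine polyGrade_mul _ p _ f ?_ h2
        rw [mem_polyGrade_iff]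
        intro k hk
        rw [coeff_monomial] at hk
        split_ifs at hk with h
        · rw [h]
        · exact absurd rfl hk
      · exact monomial_mul_Lt w (e + 1) m c f h3
    exact this hx
  have hmul : ∀ (s : PS K n), ∀ x ∈ Q, s * x ∈ Q := by
    intro s x hx
    induction s using MvPolynomial.induction_on' with
    | monomial m c => exact hmon m c x hx
    | add p q hp hq => rw [add_mul]; exact Q.add_mem hp hq
  unfold initialIdealW at hx
  induction hx using Submodule.span_induction with
  | mem x hx =>
    obtain ⟨f, hf, rfl⟩ := hx
    rw [initialForm_eq]
    set e := f.support.sup (wdeg n w) with he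
    have hL : f ∈ Lt K w (e + 1) := by
      intro m hm
      by_contra h
      have := Finset.le_sup (f := wdeg n w) (mem_support_iff.2 h)
      omega
    obtain ⟨s, hs⟩ := polyGrade_sum f
    have : wc w e f = ∑ p ∈ s, wc w e (polyProj K n p f) := by rw [← map_sum, ← hs]
    rw [this]
    refine Q.sum_mem fun p _ => ?_
    exact Submodule.mem_iSup_of_mem (p, e)
      ⟨_, ⟨⟨hI.polyProj p f hf, polyProj_mem p f⟩, polyProj_Lt w _ p f hL⟩, rfl⟩
  | zero => exact Q.zero_mem
  | add x y _ _ hx hy => exact Q.add_mem hx hy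
  | smul a x _ hx => exact hmul a x hx

theorem Yp_le (w : Fin n → ℕ) (I : Ideal (PS K n)) (p : ℤ) (e : ℕ) (x : PS K n)
    (hx : x ∈ Yp w I p e) : x ∈ initialIdealW K n w I := by
  obtain ⟨f, ⟨⟨h1, _⟩, h3⟩, rfl⟩ := hx
  exact wc_mem_init w I e f h1 h3

theorem Yp_grade (w : Fin n → ℕ) (I : Ideal (PS K n)) (p : ℤ) (e : ℕ) (x : PS K n)
    (hx : x ∈ Yp w I p e) : x ∈ polyGrade K n p := by
  obtain ⟨f, ⟨⟨_, h2⟩, _⟩, rfl⟩ := hx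
  exact wc_grade w e p f h2

theorem polyProj_Yp (w : Fin n → ℕ) (I : Ideal (PS K n)) (p : ℤ) (x : PS K n)
    (hx : x ∈ ⨆ pe : ℤ × ℕ, Yp w I pe.1 pe.2) : polyProj K n p x ∈ ⨆ e : ℕ, Yp w I p e := by
  have : (⨆ pe : ℤ × ℕ, Yp w I pe.1 pe.2) ≤ (⨆ e : ℕ, Yp w I p e).comap (polyProj K n p) := by
    refine iSup_le ?_
    rintro ⟨q, e⟩ x hx
    have hg := Yp_grade w I q e x hx
    rw [Submodule.mem_comap]
    by_cases h : q = p
    · subst h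
      rw [polyProj_self _ _ hg]
      exact Submodule.mem_iSup_of_mem e hx
    · rw [polyProj_ne p q h _ hg]
      exact zero_mem _
  exact this hx

theorem init_homog (w : Fin n → ℕ) {I : Ideal (PS K n)} (hI : IsHomog K n I) :
    IsHomog K n (initialIdealW K n w I) := by
  apply isHomog_of_polyProj
  intro p x hx
  have h := polyProj_Yp w I p x (init_le w hI x hx)
  have : (⨆ e : ℕ, Yp w I p e) ≤ (initialIdealW K n w I).restrictScalars K :=
    iSup_le fun e x hx => Yp_le w I p e x hx
  exact this h

theorem init_grade_le (w : Fin n → ℕ) {I : Ideal (PS K n)} (hI : IsHomog K n I) (p : ℤ) (x : PS K n)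
    (hx : x ∈ initialIdealW K n w I) (hp : x ∈ polyGrade K n p) : x ∈ ⨆ e : ℕ, Yp w I p e := by
  rw [← polyProj_self p x hp]
  exact polyProj_Yp w I p x (init_le w hI x hx)

/-- Diagonal matrices -/
def dg (a : Fin n → Kˣ) : GL (Fin n) K where
  val := Matrix.diagonal fun i => (a i : K)
  inv := Matrix.diagonal fun i => ((a i)⁻¹ : Kˣ)
  val_inv := by simp
  inv_val := by simp

variable (K) in
/-- The diagonal automorphism. -/
def Dt (w : Fin n → ℕ) (t : Kˣ) : GL (Fin n) K := dg fun i => (t ^ w i)⁻¹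

theorem coordChange_Dt (w : Fin n → ℕ) (t : Kˣ) (m : Fin n →₀ ℕ) (c : K) :
    coordChange K n (Dt K w t) (monomial m c) =
      (((t ^ wdeg n w m)⁻¹ : Kˣ) : K) • monomial m c := by
  have hX : ∀ i, (∑ j, ((Dt K w t : GL (Fin n) K) : Matrix (Fin n) (Fin n) K) j i • (X j : PS K n)) =
      C (((t ^ w i)⁻¹ : Kˣ) : K) * X i := by
    intro i
    simp only [Dt, dg, Matrix.diagonal_apply, ite_smul, zero_smul]
    simp [smul_eq_C_mul]
  unfold coordChange
  simp only [hX]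
  rw [aeval_monomial, monomial_eq (s := m) (a := c)]
  simp only [mul_pow, Finsupp.prod_mul]
  have : (m.prod fun i k => (C (((t ^ w i)⁻¹ : Kˣ) : K) : PS K n) ^ k) =
      C (((t ^ wdeg n w m)⁻¹ : Kˣ) : K) := by
    rw [Finsupp.prod_fintype _ _ (by simp)]
    simp only [← map_pow, ← map_prod]
    congr 1
    unfold wdeg
    rw [← Finset.prod_pow_eq_pow_sum]
    simp only [Units.val_inv_eq_inv_val, Units.val_pow_eq_pow_val,
      pow_mul, inv_pow, Finset.prod_inv_distrib]
    simp 
  rw [this, smul_eq_C_mul, algebraMap_eq]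
  ring

/-- deformation of `wc w e f`. -/
def defo (w : Fin n → ℕ) (e : ℕ) (f : PS K n) (t : Unit → K) : PS K n :=
  ∑ m ∈ f.support, eval t (X () ^ (e - wdeg n w m)) • monomial m (coeff m f)

theorem defo_poly (w : Fin n → ℕ) (e : ℕ) (f : PS K n) : PolyFam (defo w e f) :=
  PolyFam.sum _ fun _ _ => PolyFam.basic _ _

theorem defo_grade (w : Fin n → ℕ) (e : ℕ) (f : PS K n) (p : ℤ) (hf : f ∈ polyGrade K n p) (t) :
    defo w e f t ∈ polyGrade K n p := by
  refine Submodule.sum_mem _ fun m hm => Submodule.smul_mem _ _ ?_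
  rw [mem_polyGrade_iff] at *
  intro k hk
  rw [coeff_monomial] at hk
  split_ifs at hk with h
  · rw [← h]; exact hf m (mem_support_iff.1 hm)
  · exact absurd rfl hk

theorem defo_zero (w : Fin n → ℕ) (e : ℕ) (f : PS K n) (hL : f ∈ Lt K w (e + 1)) :
    defo w e f 0 = wc w e f := by
  ext m
  unfold defo
  simp only [coeff_sum, coeff_smul, coeff_monomial, smul_ite, smul_zero, coeff_wc]
  rw [Finset.sum_ite_eq' f.support m]
  by_cases h : coeff m f = 0
  · simp [h]
  · have : wdeg n w m < e + 1 := by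
      by_contra h'
      exact h (hL m (by omega))
    rw [if_pos (mem_support_iff.2 h)]
    by_cases he : wdeg n w m = e
    · simp [he]
    · have : e - wdeg n w m ≠ 0 := by omega
      simp [he, this]

theorem defo_ne (w : Fin n → ℕ) (e : ℕ) (f : PS K n) (hL : f ∈ Lt K w (e + 1)) (t : Kˣ) :
    defo w e f (fun _ => (t : K)) = ((t : K) ^ e) • coordChange K n (Dt K w t) f := by
  conv_rhs => rw [f.as_sum]
  rw [map_sum, Finset.smul_sum]
  refine Finset.sum_congr rfl fun m hm => ?_
  have : wdeg n w m < e + 1 := by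
    by_contra h'
    exact (mem_support_iff.1 hm) (hL m (by omega))
  rw [coordChange_Dt, smul_smul]
  congr 1
  rw [map_pow, eval_X]
  have ht : (t : K) ≠ 0 := t.ne_zero
  rw [Units.val_inv_eq_inv_val, Units.val_pow_eq_pow_val, pow_sub₀ _ ht (by omega)]

theorem defo_exists (w : Fin n → ℕ) {I : Ideal (PS K n)} (hI : IsHomog K n I) (p : ℤ) (x : PS K n)
    (hx : x ∈ initialIdealW K n w I) (hp : x ∈ polyGrade K n p) :
    ∃ u : (Unit → K) → PS K n, PolyFam u ∧ u 0 = x ∧ (∀ t, u t ∈ polyGrade K n p) ∧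
      ∀ t : Kˣ, u (fun _ => (t : K)) ∈ Ideal.map (coordEquiv K n (Dt K w t)) I := by
  have hx' := init_grade_le w hI p x hx hp
  clear hx hp
  induction hx' using Submodule.iSup_induction' with
  | mem e x hx =>
    obtain ⟨f, ⟨⟨h1, h2⟩, h3⟩, rfl⟩ := hx
    refine ⟨defo w e f, defo_poly w e f, defo_zero w e f h3, defo_grade w e f p h2, fun t => ?_⟩
    rw [defo_ne w e f h3, smul_eq_C_mul]
    exact Ideal.mul_mem_left _ _ (Ideal.mem_map_of_mem (coordEquiv K n (Dt K w t)) h1)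
  | zero => exact ⟨_, PolyFam.zero, rfl, fun _ => zero_mem _, fun _ => zero_mem _⟩
  | add x y _ _ hx hy =>
    obtain ⟨u, a1, a2, a3, a4⟩ := hx
    obtain ⟨v, b1, b2, b3, b4⟩ := hy
    exact ⟨_, a1.add b1, by simp only [a2, b2], fun t => add_mem (a3 t) (b3 t),
      fun t => add_mem (a4 t) (b4 t)⟩

theorem alpha_exists (w : Fin n → ℕ) {I : Ideal (PS K n)} (hI : IsHomog K n I) :
    ∃ α : (Unit → K) → ↥(initialIdealW K n w I) →ₗ[K] PS K n,
      (∀ x, PolyFam (fun t => α t x)) ∧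
      (∀ t p, (idealGrade K n (initialIdealW K n w I) p).map (α t) ≤ polyGrade K n p) ∧
      α 0 = inc K n _ ∧
      ∀ (t : Kˣ) x, α (fun _ => (t : K)) x ∈ Ideal.map (coordEquiv K n (Dt K w t)) I := by
  obtain ⟨ι, b, deg, h1, h2, h3⟩ := good_ideal (init_homog w hI)
  have hb : ∀ i, b i ∈ idealGrade K n (initialIdealW K n w I) (deg i) := by
    intro i
    rw [h1]
    exact Submodule.subset_span ⟨i, rfl, rfl⟩
  choose u a1 a2 a3 a4 using fun i => defo_exists w hI (deg i) (b i) (b i).2 (hb i)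
  have key : ∀ (P : ↥(initialIdealW K n w I) → Prop), P 0 → (∀ x y, P x → P y → P (x + y)) →
      (∀ (c : K) x, P x → P (c • x)) → (∀ i, P (b i)) → ∀ x, P x := by
    intro P h0 hadd hsm hbi x
    have hx : x ∈ Submodule.span K (Set.range b) := by rw [b.span_eq]; trivial
    induction hx using Submodule.span_induction with
    | mem x hx => obtain ⟨i, rfl⟩ := hx; exact hbi i
    | zero => exact h0
    | add x y _ _ hx hy => exact hadd x y hx hy
    | smul c x _ hx => exact hsm c x hx
  refine ⟨fun t => b.constr K fun i => u i t, ?_, ?_, ?_, ?_⟩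
  · apply key
    · simp only [map_zero]; exact PolyFam.zero
    · intro x y hx hy
      simp only [map_add]; exact hx.add hy
    · intro c x hx
      simp only [map_smul]; exact hx.smul c
    · intro i
      simp only [Module.Basis.constr_basis]
      exact a1 i
  · intro t p
    rw [h1, Submodule.map_span_le]
    rintro _ ⟨i, hi, rfl⟩
    rw [Module.Basis.constr_basis]
    have hi' : deg i = p := hi
    rw [← hi']
    exact a3 i t
  · apply b.ext
    intro i
    rw [Module.Basis.constr_basis]
    exact a2 i
  · intro t
    apply key
    · rw [map_zero]; exact zero_mem _
    · intro x y hx hy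
      rw [map_add]; exact add_mem hx hy
    · intro c x hx
      rw [map_smul, smul_eq_C_mul]; exact Ideal.mul_mem_left _ _ hx
    · intro i
      rw [Module.Basis.constr_basis]
      exact a4 i t

theorem finrank_idealGrade (I : Ideal (PS K n)) (p : ℤ) :
    Module.finrank K (idealGrade K n I p) =
      Module.finrank K (I.restrictScalars K ⊓ polyGrade K n p : Submodule K (PS K n)) := by
  rw [← finrank_map_of_injective _ (inc_inj I)]
  have : (idealGrade K n I p).map (inc K n I) = I.restrictScalars K ⊓ polyGrade K n p := by
    ext x
    constructor
    · rintro ⟨y, hy, rfl⟩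
      exact ⟨y.2, hy⟩
    · rintro ⟨h1, h2⟩
      exact ⟨⟨x, h1⟩, h2, rfl⟩
  rw [this]

theorem hilb_le (w : Fin n → ℕ) (I : Ideal (PS K n)) (p : ℤ) :
    Module.finrank K (idealGrade K n I p) ≤
      Module.finrank K (idealGrade K n (initialIdealW K n w I) p) := by
  rw [finrank_idealGrade, finrank_idealGrade]
  have hfd := polyGrade_finite (K := K) (n := n) p
  let A : Ideal (PS K n) → ℕ → Submodule K (PS K n) := fun I e =>
    I.restrictScalars K ⊓ polyGrade K n p ⊓ Lt K w e
  have hA : ∀ I e, FiniteDimensional K (A I e) := fun I e =>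
    Submodule.finiteDimensional_of_le (inf_le_left.trans inf_le_right : A I e ≤ polyGrade K n p)
  have hker : ∀ I e, LinearMap.ker (wc w e) ⊓ A I (e + 1) = A I e := by
    intro I e
    ext x
    simp only [A, Submodule.mem_inf, LinearMap.mem_ker, ker_wc_Lt (w := w) (e := e)]
    tauto
  have hmain : ∀ e, Module.finrank K (A I e) ≤ Module.finrank K (A (initialIdealW K n w I) e) := by
    intro e
    induction e with
    | zero =>
      have : A I 0 = ⊥ := by
        rw [eq_bot_iff]
        rintro x ⟨_, hx⟩
        rw [Submodule.mem_bot]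
        ext m
        exact hx m (Nat.zero_le _)
      rw [this, finrank_bot]
      exact Nat.zero_le _
    | succ e ih =>
      have e1 := finrank_map_add_inf (wc w e) (A I (e + 1))
      have e2 := finrank_map_add_inf (wc w e) (A (initialIdealW K n w I) (e + 1))
      rw [hker] at e1 e2
      have : (A I (e + 1)).map (wc w e) ≤ (A (initialIdealW K n w I) (e + 1)).map (wc w e) := by
        rintro _ ⟨f, ⟨⟨h1, h2⟩, h3⟩, rfl⟩
        exact ⟨wc w e f, ⟨⟨wc_mem_init w I e f h1 h3, wc_grade w e p f h2⟩, wc_Lt w e f⟩,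
          wc_wc w e f⟩
      have := Submodule.finrank_mono this
      omega
  obtain ⟨e, he⟩ := Lt_grade_bound (K := K) w p
  have hAe : ∀ I : Ideal (PS K n), A I e = I.restrictScalars K ⊓ polyGrade K n p := fun I =>
    inf_eq_left.2 (inf_le_right.trans he)
  rw [← hAe, ← hAe]
  exact hmain e

theorem exists_unit_eval [Infinite K] (F : MvPolynomial Unit K) (hF : F ≠ 0) :
    ∃ t : Kˣ, eval (fun _ => (t : K)) F ≠ 0 := by
  by_contra h
  push Not at h
  have h2 : F * X () = 0 := by
    apply MvPolynomial.funext
    intro t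
    rw [map_mul, map_zero, eval_X]
    by_cases ht : t () = 0
    · rw [ht, mul_zero]
    · have := h (Units.mk0 _ ht)
      have e : (fun _ : Unit => ((Units.mk0 _ ht : Kˣ) : K)) = t := by
        ext ⟨⟩; rfl
      rw [e] at this
      rw [this, zero_mul]
  rcases mul_eq_zero.1 h2 with h3 | h3
  · exact hF h3
  · exact X_ne_zero _ h3

theorem hilb_eq [Infinite K] (w : Fin n → ℕ) {I : Ideal (PS K n)} (hI : IsHomog K n I) (p : ℤ) :
    Module.finrank K (idealGrade K n (initialIdealW K n w I) p) =
      Module.finrank K (idealGrade K n I p) := by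
  apply le_antisymm _ (hilb_le w I p)
  obtain ⟨α, a1, a2, a3, a4⟩ := alpha_exists w hI
  have hfd := polyGrade_finite (K := K) (n := n) p
  have hfin : FiniteDimensional K
      ((idealGrade K n (initialIdealW K n w I) p).map (inc K n (initialIdealW K n w I))) := by
    rw [← a3]; exact Submodule.finiteDimensional_of_le (a2 0 p)
  obtain ⟨F, hF, h⟩ := PolyFam.semicont
    (fun (k : idealGrade K n (initialIdealW K n w I) p) t => α t k) (fun k => a1 k) 0
    ((idealGrade K n (initialIdealW K n w I) p).map (inc K n (initialIdealW K n w I))) (by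
      have : (Set.range fun k : idealGrade K n (initialIdealW K n w I) p => α 0 k) =
        ((idealGrade K n (initialIdealW K n w I) p).map (inc K n (initialIdealW K n w I)) : Set _) := by
        rw [a3]
        ext x
        constructor
        · rintro ⟨k, rfl⟩; exact ⟨k, k.2, rfl⟩
        · rintro ⟨k, hk, rfl⟩; exact ⟨⟨k, hk⟩, rfl⟩
      rw [this, Submodule.span_eq])
  obtain ⟨t, ht⟩ := exists_unit_eval F (by rintro rfl; simp at hF)
  have := h _ ht ((Ideal.map (coordEquiv K n (Dt K w t)) I).restrictScalars K ⊓ polyGrade K n p)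
    (Submodule.finiteDimensional_of_le inf_le_right)
    (fun k => ⟨a4 t k, a2 _ p ⟨k, k.2, rfl⟩⟩)
  rw [finrank_map_of_injective _ (inc_inj _), ← finrank_idealGrade,
    finrank_ideal_map (coordEquiv_gr _)] at this
  exact this

end Grob

open MvPolynomial TensorProduct CategoryTheory

noncomputable section Fin9
set_option linter.unusedSectionVars false

variable {K : Type} [Field K] {n : ℕ}

variable (K n) in
/-- The degree-`j` strand. -/
def Cj (I J : Ideal (PS K n)) (i : ℕ) (j : ℤ) :
    Submodule K (↥I ⊗[K] barD K n (PS K n ⧸ J) i) :=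
  tensorGrade K (idealGrade K n I) (barDGrade K n (PS K n ⧸ J) (quotGrade K n J) i) j

theorem good_Cj {I J : Ideal (PS K n)} (hI : IsHomog K n I) (hJ : IsHomog K n J) (i : ℕ) :
    Good (K := K) (A := ↥I ⊗[K] barD K n (PS K n ⧸ J) i) (Cj K n I J i) := (good_ideal hI).tensor (good_barD (good_quot hJ) i)

theorem range_inf {I J : Ideal (PS K n)} (hI : IsHomog K n I) (hJ : IsHomog K n J) (i : ℕ) (j : ℤ) :
    LinearMap.range (barB K n (PS K n ⧸ J) ↥I i) ⊓ Cj K n I J i j =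
      (Cj K n I J (i + 1) j).map (barB K n (PS K n ⧸ J) ↥I i) := by
  have hg := barB_graded (M := ↥I) (quot_act J) (ideal_act I) i
  apply le_antisymm
  · rintro _ ⟨⟨x, rfl⟩, hx⟩
    obtain ⟨y, hy, hyx⟩ := (good_Cj hI hJ (i + 1)).lift (good_Cj hI hJ i) _ hg hx
    exact ⟨y, hy, hyx⟩
  · refine le_inf ?_ (hg j)
    rintro _ ⟨x, _, rfl⟩
    exact ⟨x, rfl⟩

theorem torIQ_zero {I J : Ideal (PS K n)} (hI : IsHomog K n I) (hJ : IsHomog K n J) (j : ℤ) :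
    torIQ K n I J 0 j = Module.finrank K (Cj K n I J 0 j) - rk K n 0 j I J := by
  have : torIQ K n I J 0 j = Module.finrank K (Cj K n I J 0 j) -
    Module.finrank K
      ↥(LinearMap.range (barB K n (PS K n ⧸ J) ↥I 0) ⊓ Cj K n I J 0 j) := rfl
  rw [this, range_inf hI hJ]
  rfl

theorem torIQ_succ {I J : Ideal (PS K n)} (hI : IsHomog K n I) (hJ : IsHomog K n J) (i : ℕ)
    (j : ℤ) :
    torIQ K n I J (i + 1) j =
      Module.finrank K (Cj K n I J (i + 1) j) - rk K n i j I J - rk K n (i + 1) j I J := by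
  have h1 : torIQ K n I J (i + 1) j =
    Module.finrank K ↥(LinearMap.ker (barB K n (PS K n ⧸ J) ↥I i) ⊓ Cj K n I J (i + 1) j) -
    Module.finrank K
      ↥(LinearMap.range (barB K n (PS K n ⧸ J) ↥I (i + 1)) ⊓ Cj K n I J (i + 1) j) := rfl
  rw [h1, range_inf hI hJ]
  have hfin := (good_Cj hI hJ (i + 1)).finite j
  have h2 := finrank_map_add_inf (K := K) (A := ↥I ⊗[K] barD K n (PS K n ⧸ J) (i + 1))
    (B := ↥I ⊗[K] barD K n (PS K n ⧸ J) i) (barB K n (PS K n ⧸ J) ↥I i) (Cj K n I J (i + 1) j)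
  have h3 : rk K n i j I J =
    Module.finrank K ((Cj K n I J (i + 1) j).map (barB K n (PS K n ⧸ J) ↥I i)) := rfl
  have h4 : rk K n (i + 1) j I J =
    Module.finrank K ((Cj K n I J (i + 1 + 1) j).map (barB K n (PS K n ⧸ J) ↥I (i + 1))) := rfl
  rw [← h4, h3]
  omega

theorem torIQ_vanish {I J : Ideal (PS K n)} (hI : IsHomog K n I) (hJ : IsHomog K n J) (i : ℕ)
    (j : ℤ) (hij : j < i) : torIQ K n I J i j = 0 := by
  have hv := bar_vanish (quotGrade K n J) (quot_act J) (fun p hp => (good_quot hJ).neg hp) j i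
    ↥I (idealGrade K n I) 0 (ideal_act I) (fun p hp => (good_ideal hI).neg hp) (by omega)
  cases i with
  | zero =>
    have h1 : torIQ K n I J 0 j = Module.finrank K (Cj K n I J 0 j) -
      Module.finrank K
        ↥(LinearMap.range (barB K n (PS K n ⧸ J) ↥I 0) ⊓ Cj K n I J 0 j) := rfl
    have h2 : LinearMap.range (barB K n (PS K n ⧸ J) ↥I 0) ⊓ Cj K n I J 0 j = Cj K n I J 0 j :=
      inf_eq_right.2 fun x hx => hv x hx (fun k e => by omega)
    rw [h1, h2, Nat.sub_self]
  | succ i =>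
    have h1 : torIQ K n I J (i + 1) j =
      Module.finrank K ↥(LinearMap.ker (barB K n (PS K n ⧸ J) ↥I i) ⊓ Cj K n I J (i + 1) j) -
      Module.finrank K
        ↥(LinearMap.range (barB K n (PS K n ⧸ J) ↥I (i + 1)) ⊓ Cj K n I J (i + 1) j) := rfl
    have hfin := (good_Cj hI hJ (i + 1)).finite j
    have hle : LinearMap.ker (barB K n (PS K n ⧸ J) ↥I i) ⊓ Cj K n I J (i + 1) j ≤
        LinearMap.range (barB K n (PS K n ⧸ J) ↥I (i + 1)) ⊓ Cj K n I J (i + 1) j := by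
      rintro x ⟨hx1, hx2⟩
      refine ⟨hv x hx2 ?_, hx2⟩
      intro k e
      obtain rfl : i = k := by omega
      exact hx1
    have hfin2 : Module.Finite K ↥(LinearMap.range (barB K n (PS K n ⧸ J) ↥I (i + 1)) ⊓
      Cj K n I J (i + 1) j) :=
      Submodule.finiteDimensional_of_le (V := ↥I ⊗[K] barD K n (PS K n ⧸ J) (i + 1))
        (S₂ := Cj K n I J (i + 1) j) inf_le_right
    have := Submodule.finrank_mono hle
    rw [h1]
    omega

theorem torIQ_le {I J I' J' : Ideal (PS K n)} (hI : IsHomog K n I) (hJ : IsHomog K n J)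
    (hI' : IsHomog K n I') (hJ' : IsHomog K n J')
    (eI : ∀ p, Module.finrank K (idealGrade K n I p) = Module.finrank K (idealGrade K n I' p))
    (eJ : ∀ p, Module.finrank K (quotGrade K n J p) = Module.finrank K (quotGrade K n J' p))
    (j : ℤ) (hr : ∀ i : ℕ, (i : ℤ) ≤ j → rk K n i j I' J' ≤ rk K n i j I J) (i : ℕ) :
    torIQ K n I J i j ≤ torIQ K n I' J' i j := by
  by_cases hij : j < i
  · rw [torIQ_vanish hI hJ i j hij]; exact Nat.zero_le _
  have hC : Module.finrank K (Cj K n I J i j) = Module.finrank K (Cj K n I' J' i j) :=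
    finrank_tensorGrade_eq (good_ideal hI) (good_barD (good_quot hJ) i) (good_ideal hI')
      (good_barD (good_quot hJ') i) eI (finrank_barD (good_quot hJ) (good_quot hJ') eJ i) j
  cases i with
  | zero =>
    rw [torIQ_zero hI hJ, torIQ_zero hI' hJ']
    have := hr 0 (by omega)
    omega
  | succ i =>
    rw [torIQ_succ hI hJ, torIQ_succ hI' hJ']
    have h1 := hr i (by push_cast at *; omega)
    have h2 := hr (i + 1) (by omega)
    omega

/-- product of finitely many polynomials -/
theorem exists_prod {σ : Type} (t₀ : σ → K) (P : ℕ → (σ → K) → Prop) (N : ℕ)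
    (h : ∀ i, ∃ F : MvPolynomial σ K, eval t₀ F ≠ 0 ∧ ∀ t, eval t F ≠ 0 → P i t) :
    ∃ F : MvPolynomial σ K, eval t₀ F ≠ 0 ∧ ∀ t, eval t F ≠ 0 → ∀ i < N, P i t := by
  choose F h1 h2 using h
  refine ⟨∏ i ∈ Finset.range N, F i, ?_, fun t ht i hi => ?_⟩
  · rw [map_prod, Finset.prod_ne_zero_iff]
    exact fun i _ => h1 i
  · rw [map_prod, Finset.prod_ne_zero_iff] at ht
    exact h2 i t (ht i (Finset.mem_range.2 hi))

theorem map_coord_mul (g g' : GL (Fin n) K) (J : Ideal (PS K n)) :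
    Ideal.map (coordEquiv K n g) (Ideal.map (coordEquiv K n g') J) =
      Ideal.map (coordEquiv K n (g * g')) J := by
  ext x
  rw [mem_map_equiv, mem_map_equiv, mem_map_equiv]
  change coordChange K n g'⁻¹ (coordChange K n g⁻¹ x) ∈ J ↔ coordChange K n (g * g')⁻¹ x ∈ J
  rw [coordChange_mul, mul_inv_rev]

theorem map_coord_one (J : Ideal (PS K n)) :
    Ideal.map (coordEquiv K n 1) J = J := by
  ext x
  rw [mem_map_equiv]
  change coordChange K n 1⁻¹ x ∈ J ↔ _
  rw [inv_one, coordChange_one]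

/-- Semicontinuity in the initial degeneration. -/
theorem step1 [Infinite K] (j : ℤ) (N : ℕ) (w w' : Fin n → ℕ) {I J : Ideal (PS K n)}
    (hI : IsHomog K n I) (hJ : IsHomog K n J) :
    ∃ g₀ : GL (Fin n) K, ∀ i < N, rk K n i j (initialIdealW K n w I) (initialIdealW K n w' J) ≤
      rk K n i j I (Ideal.map (coordEquiv K n g₀) J) := by
  obtain ⟨α, a1, a2, a3, a4⟩ := alpha_exists w hI
  obtain ⟨β, b1, b2, b3, b4⟩ := alpha_exists w' hJ
  obtain ⟨F, hF, h⟩ := exists_prod 0 _ N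
    (fun i => lemmaA i j (init_homog w' hJ) α β a1 b1 a2 b2 0 a3 b3)
  obtain ⟨t, ht⟩ := exists_unit_eval F (by rintro rfl; simp at hF)
  refine ⟨(Dt K w t)⁻¹ * Dt K w' t, fun i hi => ?_⟩
  have hI' := hI.map (coordEquiv_gr (Dt K w t))
  have hJ' := hJ.map (coordEquiv_gr (Dt K w' t))
  have h1 := h _ ht i hi _ _ hJ' (finrank_quot_eq fun p => by
    rw [hilb_eq w' hJ, finrank_ideal_map (coordEquiv_gr _)]) (a4 t) (b4 t)
  have h2 := rk_map_le (coordEquiv_gr (Dt K w t)⁻¹) i j hI' hJ'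
  rw [map_coord_mul, map_coord_mul, inv_mul_cancel, map_coord_one] at h2
  exact h1.trans h2

theorem step2 (j : ℤ) (N : ℕ) {I J : Ideal (PS K n)} (hJ : IsHomog K n J) (g₀ : GL (Fin n) K) :
    ∃ F : MvPolynomial (Fin n × Fin n) K, F ≠ 0 ∧ ∀ g : GL (Fin n) K,
      eval (fun p => (g : Matrix (Fin n) (Fin n) K) p.1 p.2) F ≠ 0 → ∀ i < N,
      rk K n i j I (Ideal.map (coordEquiv K n g₀) J) ≤
        rk K n i j I (Ideal.map (coordEquiv K n g) J) := by
  let v : Fin n → (Fin n × Fin n → K) → PS K n := fun i t => ∑ k, t (k, i) • X k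
  have hv : ∀ i, PolyFam (v i) := fun i => PolyFam.sum _ fun k _ => by
    have := PolyFam.basic (X (k, i) : MvPolynomial (Fin n × Fin n) K) (X k : PS K n)
    simpa only [eval_X] using this
  have hvh : ∀ t i, (v i t).IsHomogeneous 1 := fun t i =>
    MvPolynomial.IsHomogeneous.sum _ _ _ fun k _ =>
      (homogeneousSubmodule (Fin n) K 1).smul_mem _ (isHomogeneous_X K k)
  let J₀ := Ideal.map (coordEquiv K n g₀) J
  have hJ₀ : IsHomog K n J₀ := hJ.map (coordEquiv_gr g₀)
  let mat : GL (Fin n) K → (Fin n × Fin n → K) :=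
    fun g p => (g : Matrix (Fin n) (Fin n) K) p.1 p.2
  let β : (Fin n × Fin n → K) → ↥J₀ →ₗ[K] PS K n := fun t =>
    (aeval (fun i => v i t) : PS K n →ₐ[K] PS K n).toLinearMap.comp
      ((coordChange K n g₀⁻¹).toLinearMap.comp (inc K n J₀))
  have hβg : ∀ (g : GL (Fin n) K) (x : J₀), β (mat g) x = coordChange K n (g * g₀⁻¹) x := by
    intro g x
    rw [← coordChange_mul]
    rfl
  obtain ⟨F, hF, h⟩ := exists_prod (mat g₀) _ N
    (fun i => lemmaA (I₀ := I) i j hJ₀ (fun _ => inc K n I) β (fun x => PolyFam.const _)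
      (fun x => PolyFam.aeval_mv hv _)
      (fun t p => by rintro _ ⟨y, hy, rfl⟩; exact hy)
      (fun t p => by
        rintro _ ⟨y, hy, rfl⟩
        exact aeval_linear_grade _ (hvh t) p _ (coordChange_grade _ p _ hy))
      (mat g₀) rfl (LinearMap.ext fun x => by
        rw [hβg, mul_inv_cancel, coordChange_one]; rfl))
  refine ⟨F, by rintro rfl; simp at hF, fun g hg i hi => ?_⟩
  refine h (mat g) hg i hi I _ (hJ.map (coordEquiv_gr g)) (finrank_quot_eq fun p => ?_)
    (fun x => x.2) (fun x => ?_)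
  · rw [finrank_ideal_map (coordEquiv_gr _), finrank_ideal_map (coordEquiv_gr _)]
  · rw [hβg, mem_map_equiv]
    change coordChange K n g⁻¹ (coordChange K n (g * g₀⁻¹) x) ∈ J
    rw [coordChange_mul, inv_mul_cancel_left]
    exact (mem_map_equiv _ _ _).1 x.2

end Fin9

noncomputable section

variable (K : Type) [Field K] (n : ℕ)

/-- **Proposition 2.6(ii)** (Caviglia–Murai): fix `j`, homogeneous ideals `I, J ⊆ S` and
weights `w, w' ∈ ℤ_{≥0}^n`.  For a general change of coordinates `g ∈ GL_n(K)`,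
`dim_K Tor_i(I, S/g(J))_j ≤ dim_K Tor_i(in_w(I), S/in_{w'}(J))_j` for all `i`. -/
theorem tor_dim_general_le_initial_weights_ideal [Infinite K] (j : ℤ)
    (w w' : Fin n → ℕ) (I J : Ideal (PS K n)) (hI : IsHomog K n I) (hJ : IsHomog K n J) :
    generally K n (fun g => ∀ i : ℕ,
      torIQ K n I (Ideal.map (coordChange K n g) J) i j ≤
        torIQ K n (initialIdealW K n w I) (initialIdealW K n w' J) i j) := by
  obtain ⟨g₀, h1⟩ := step1 j (j.toNat + 1) w w' hI hJ
  obtain ⟨F, hF, h2⟩ := step2 (I := I) j (j.toNat + 1) hJ g₀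
  refine ⟨F, hF, fun g hg => ?_⟩
  change ∀ i : ℕ, torIQ K n I (Ideal.map (coordEquiv K n g) J) i j ≤ _
  refine torIQ_le hI (hJ.map (coordEquiv_gr g)) (init_homog w hI) (init_homog w' hJ)
    (fun p => (hilb_eq w hI p).symm) (finrank_quot_eq fun p => ?_) j (fun i hi => ?_)
  · rw [finrank_ideal_map (coordEquiv_gr _), hilb_eq w' hJ]
  · exact (h1 i (by omega)).trans (h2 g hg i (by omega))

end
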